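/- arXiv:0908.3521 — 3 statements merged into one kernel-verified Lean document; each statement's English description precedes it below -/
import Mathlib

section
/- Let p be an odd prime, Δ an integer not divisible by p, set ε = 1 if the image of Δ in ℤ/pℤ is a square and ε = −1 otherwise, and let k be a natural number. Consider the quadratic form in n = 2k+2 variables B(x₀, x₁, …, x_{2k+1}) = x₀² − Δ·x₁² + ∑_{i=1}^{k} x_{2i}·x_{2i+1}. For natural numbers T and ℓ, let N_{T,ℓ} be the number of v ∈ (ℤ/p^ℓℤ)^n with B(v) equal to the image of p^{2T} in ℤ/p^ℓℤ. Then for all real a, z with |a| < 1 and |z| < 1, setting w = z/p^{k+1}, the double series indexed by (T,ℓ) ∈ ℕ×ℕ with terms a^T · z^ℓ · N_{T,ℓ}/p^{nℓ} converges with sum (1 − ε·w/p)(1 − a²w²) / ((1 − z/p)(1 − a)(1 − a·w²)(1 − ε·a·w)). -/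
/-!
Let `N T l` count the `v` modulo `p ^ l` with `B v = p ^ (2 * T)`, for `B` in `n` variables. As `B`
is nonsingular modulo `p`, the solutions that are nonzero modulo `p` lift by Hensel's lemma, in
`p ^ (n - 1)` ways from each power of `p` to the next. Those that vanish modulo `p` are the
`p • u` with `B u = p ^ (2 * T - 2)` modulo `p ^ (l - 2)`. The densities
`u T l = N T l / p ^ (n * l)` therefore obey `u (T + 1) (l + 2) = γ / p ^ l + u T l / p ^ n`,
which expresses their double generating function through the numbers of zeros of `B` and of `B - 1`
over `ZMod p`. These follow from a quadratic character sum for `x₀ ^ 2 - Δ * x₁ ^ 2` and from the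
nondegeneracy of the dot product for the hyperbolic part.
-/

open MvPolynomial

section Fibers

variable {G H : Type*} [AddGroup G] [AddGroup H]

theorem card_subtype_comp_addMonoidHom (f : G →+ H) (P : H → Prop) :
    Nat.card {g // P (f g)} = Nat.card f.ker * Nat.card {h // h ∈ f.range ∧ P h} := by
  have fiber_equiv (h : {h // h ∈ f.range ∧ P h}) : {g // f g = h} ≃ f.ker :=
    (Equiv.subtypeEquivRight fun g => by
      rw [Set.mem_preimage, h.2.1.choose_spec, Set.mem_singleton_iff]).trans
      (f.fiberEquivKer h.2.1.choose)
  rw [← Nat.card_congr (Equiv.sigmaSubtypeFiberEquivSubtype f (q := fun h => h ∈ f.range ∧ P h)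
      fun g => by simp), Nat.card_congr (Equiv.sigmaCongrRight fiber_equiv),
    Nat.card_congr (Equiv.sigmaEquivProd _ _), Nat.card_prod, mul_comm]

theorem card_ker_mul_card_of_surjective {f : G →+ H} (hf : Function.Surjective f) :
    Nat.card f.ker * Nat.card H = Nat.card G := by
  rw [← f.ker.card_mul_index, AddSubgroup.index_ker, AddMonoidHom.range_eq_top.2 hf,
    AddSubgroup.card_top]

theorem card_fiber_mul_card_of_surjective {f : G →+ H} (hf : Function.Surjective f) (h : H) :
    Nat.card {g // f g = h} * Nat.card H = Nat.card G := by
  rw [← card_ker_mul_card_of_surjective hf]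
  congr 1
  exact Nat.card_congr (AddMonoidHom.fiberEquivKerOfSurjective hf h)

end Fibers

theorem isUnit_of_isUnit_map {R S : Type*} [CommRing R] [CommRing S] {φ : R →+* S}
    (hφ : Function.Surjective φ) (hker : ∀ x, φ x = 0 → IsNilpotent x) {x : R}
    (hx : IsUnit (φ x)) : IsUnit x := by
  obtain ⟨s, hs⟩ := hx.exists_right_inv
  obtain ⟨y, rfl⟩ := hφ s
  have hxy : IsNilpotent (x * y - 1) := hker _ (by rw [map_sub, map_mul, hs, map_one, sub_self])
  exact isUnit_of_mul_isUnit_left (by simpa using hxy.isUnit_one_add)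

section Lifting

variable {σ R S : Type*} [CommRing R] [CommRing S]

theorem map_aeval_int [Algebra ℤ R] [Algebra ℤ S] (φ : R →+* S) (v : σ → R)
    (F : MvPolynomial σ ℤ) : φ (aeval v F) = aeval (φ ∘ v) F :=
  comp_aeval_apply v { φ with commutes' := by simp } F

theorem aeval_smul_of_isHomogeneous {F : MvPolynomial σ ℤ} {d : ℕ} (hF : F.IsHomogeneous d)
    (c : R) (v : σ → R) : aeval (c • v) F = c ^ d * aeval v F := by
  simp only [aeval_def, eval₂_eq, Finset.mul_sum, Pi.smul_apply, smul_eq_mul]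
  refine Finset.sum_congr rfl fun e he => ?_
  simp only [mul_pow, Finset.prod_mul_distrib, Finset.prod_pow_eq_pow_sum]
  rw [← hF.degree_eq_sum_deg_support he]
  ring

section Coordinate

variable [DecidableEq σ]

/-- The univariate polynomial obtained from `F` by letting the `i`-th coordinate vary and fixing
the others to be those of `v`. -/
noncomputable def coordPoly (F : MvPolynomial σ ℤ) (v : σ → R) (i : σ) : Polynomial R :=
  aeval (Function.update (Polynomial.C ∘ v) i Polynomial.X) F

theorem eval_coordPoly (F : MvPolynomial σ ℤ) (v : σ → R) (i : σ) (x : R) :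
    (coordPoly F v i).eval x = aeval (Function.update v i x) F := by
  rw [coordPoly, ← Polynomial.coe_evalRingHom, map_aeval_int, Function.comp_update]
  simp [Function.comp_def]

theorem derivative_coordPoly (F : MvPolynomial σ ℤ) (v : σ → R) (i : σ) :
    Polynomial.derivative (coordPoly F v i) = coordPoly (pderiv i F) v i := by
  induction F using MvPolynomial.induction_on with
  | C n => simp [coordPoly]
  | add p q hp hq => simp_all [coordPoly]
  | mul_X p j hp =>
    obtain rfl | hij := eq_or_ne j i
    · simp_all [coordPoly]
      ring
    · simp_all [coordPoly]
      ring

theorem existsUnique_lift_update {φ : R →+* S} (hφ : Function.Surjective φ)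
    (hker : ∀ x, φ x = 0 ↔ IsNilpotent x) {F : MvPolynomial σ ℤ} {c : R} {v : σ → R} {i : σ}
    (hv : aeval (φ ∘ v) F = φ c) (hi : IsUnit (aeval (φ ∘ v) (pderiv i F))) :
    ∃! x, φ x = φ (v i) ∧ aeval (Function.update v i x) F = c := by
  have root_mod_nilpotent : IsNilpotent ((coordPoly F v i - Polynomial.C c).aeval (v i)) := by
    rw [← hker, Polynomial.coe_aeval_eq_eval, Polynomial.eval_sub, eval_coordPoly,
      Function.update_eq_self, Polynomial.eval_C, map_sub, map_aeval_int, hv, sub_self]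
  have derivative_unit :
      IsUnit ((Polynomial.derivative (coordPoly F v i - Polynomial.C c)).aeval (v i)) := by
    refine isUnit_of_isUnit_map hφ (fun x => (hker x).1) ?_
    rwa [Polynomial.coe_aeval_eq_eval, Polynomial.derivative_sub, Polynomial.derivative_C, sub_zero,
      derivative_coordPoly, eval_coordPoly, Function.update_eq_self, map_aeval_int]
  have newton := Polynomial.existsUnique_nilpotent_sub_and_aeval_eq_zero root_mod_nilpotent
    derivative_unit
  simpa only [← hker, Polynomial.coe_aeval_eq_eval, Polynomial.eval_sub, eval_coordPoly,
    Polynomial.eval_C, map_sub, sub_eq_zero, eq_comm (a := φ (v i))] using newton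

end Coordinate

variable {φ : R →+* S}

theorem card_fiber_eq_card_ker (hφ : Function.Surjective φ) (s : S) :
    Nat.card {x // φ x = s} = Nat.card (RingHom.ker φ) :=
  Nat.card_congr (AddMonoidHom.fiberEquivKerOfSurjective (f := φ.toAddMonoidHom) hφ s)

variable [Fintype σ]

theorem card_subtype_comp_eq (hφ : Function.Surjective φ) (w : σ → S) :
    Nat.card {v : σ → R // φ ∘ v = w} = Nat.card (RingHom.ker φ) ^ Fintype.card σ := by
  simp only [funext_iff, Function.comp_apply]
  simp only [Nat.card_congr (Equiv.subtypePiEquivPi (p := fun i x => φ x = w i)), Nat.card_pi,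
    card_fiber_eq_card_ker hφ, Finset.prod_const, Finset.card_univ]

theorem card_lifts_mul_card_ker (hφ : Function.Surjective φ)
    (hker : ∀ x, φ x = 0 ↔ IsNilpotent x) {F : MvPolynomial σ ℤ} {c : R} {w : σ → S} {i : σ}
    (hw : aeval w F = φ c) (hi : IsUnit (aeval w (pderiv i F))) :
    Nat.card {v : σ → R // φ ∘ v = w ∧ aeval v F = c} * Nat.card (RingHom.ker φ) =
      Nat.card (RingHom.ker φ) ^ Fintype.card σ := by
  classical
  have unique_correction {v : σ → R} (hv : φ ∘ v = w) :
      ∃! x, φ x = w i ∧ aeval (Function.update v i x) F = c := by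
    subst hv
    exact existsUnique_lift_update hφ hker hw hi
  have comp_update {v : σ → R} (hv : φ ∘ v = w) {x : R} (hx : φ x = w i) :
      φ ∘ Function.update v i x = w := by
    rw [Function.comp_update, hv, hx, Function.update_eq_self]
  let perturb : {v : σ → R // φ ∘ v = w ∧ aeval v F = c} × {x // φ x = w i} →
      {v : σ → R // φ ∘ v = w} := fun u => ⟨Function.update u.1 i u.2, comp_update u.1.2.1 u.2.2⟩
  have perturb_bijective : perturb.Bijective := by
    constructor
    · rintro ⟨⟨v, hv, hvc⟩, x, hx⟩ ⟨⟨v', hv', hvc'⟩, x', hx'⟩ heq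
      have update_eq : Function.update v i x = Function.update v' i x' := congrArg Subtype.val heq
      obtain rfl : x = x' := by simpa using congrFun update_eq i
      have v'_eq : v' = Function.update v i (v' i) := by
        simpa using (congrArg (Function.update · i (v' i)) update_eq).symm
      have coord_eq : v i = v' i := (unique_correction hv).unique
        ⟨congrFun hv i, by rwa [Function.update_eq_self]⟩ ⟨congrFun hv' i, by rwa [← v'_eq]⟩
      have v_eq : v = v' := by rw [v'_eq, ← coord_eq, Function.update_eq_self]
      simp only [v_eq]
    · rintro ⟨u, hu⟩
      obtain ⟨x, ⟨hx, hxc⟩, -⟩ := unique_correction hu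
      exact ⟨(⟨Function.update u i x, comp_update hu hx, hxc⟩, ⟨u i, congrFun hu i⟩),
        Subtype.ext (by simp [perturb])⟩
  rw [← card_subtype_comp_eq hφ w, ← Nat.card_congr (Equiv.ofBijective _ perturb_bijective),
    Nat.card_prod, card_fiber_eq_card_ker hφ]

theorem card_nonsingular_lifts [Finite R] (hφ : Function.Surjective φ)
    (hker : ∀ x, φ x = 0 ↔ IsNilpotent x) {F : MvPolynomial σ ℤ} {P : (σ → S) → Prop}
    (hP : ∀ w, P w → ∃ i, IsUnit (aeval w (pderiv i F))) (c : R) :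
    Nat.card {v : σ → R // P (φ ∘ v) ∧ aeval v F = c} =
      Nat.card (RingHom.ker φ) ^ (Fintype.card σ - 1) *
        Nat.card {w : σ → S // P w ∧ aeval w F = φ c} := by
  have : Finite S := Finite.of_surjective φ hφ
  have := Fintype.ofFinite {w : σ → S // P w ∧ aeval w F = φ c}
  let reduce (v : {v : σ → R // P (φ ∘ v) ∧ aeval v F = c}) : {w // P w ∧ aeval w F = φ c} :=
    ⟨φ ∘ v, v.2.1, by rw [← map_aeval_int, v.2.2]⟩
  have card_fiber (w : {w // P w ∧ aeval w F = φ c}) :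
      Nat.card {v // reduce v = w} = Nat.card (RingHom.ker φ) ^ (Fintype.card σ - 1) := by
    obtain ⟨w, hw, hwc⟩ := w
    obtain ⟨i, hi⟩ := hP w hw
    have : Nonempty σ := ⟨i⟩
    have fiber_equiv : {v // reduce v = ⟨w, hw, hwc⟩} ≃
        {v : σ → R // φ ∘ v = w ∧ aeval v F = c} :=
      { toFun := fun v => ⟨v.1, congrArg Subtype.val v.2, v.1.2.2⟩
        invFun := fun v => ⟨⟨v.1, by rwa [v.2.1], v.2.2⟩, Subtype.ext v.2.1⟩ }
    rw [Nat.card_congr fiber_equiv, ← Nat.mul_left_inj (Nat.card_pos (α := RingHom.ker φ)).ne',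
      card_lifts_mul_card_ker hφ hker hwc hi, pow_sub_one_mul Fintype.card_ne_zero]
  rw [← Nat.card_congr (Equiv.sigmaFiberEquiv reduce), Nat.card_sigma]
  simp only [card_fiber, Finset.sum_const, Finset.card_univ, smul_eq_mul, Nat.card_eq_fintype_card,
    mul_comm]

end Lifting

section Reduction

variable {N n q : ℕ}

theorem castHom_eq_zero_iff_natCast_dvd (h : n ∣ N) (x : ZMod N) :
    ZMod.castHom h (ZMod n) x = 0 ↔ (n : ZMod N) ∣ x := by
  refine ⟨fun hx => ?_, fun ⟨y, hy⟩ => by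
    rw [hy, map_mul, map_natCast, ZMod.natCast_self, zero_mul]⟩
  obtain ⟨x, rfl⟩ := ZMod.intCast_surjective x
  rw [map_intCast, ZMod.intCast_zmod_eq_zero_iff_dvd] at hx
  simpa using map_dvd (Int.castRingHom (ZMod N)) hx

theorem natCast_mul_eq_zero_iff_castHom (h : n * q = N) (hq : q ≠ 0) (x : ZMod N) :
    (q : ZMod N) * x = 0 ↔ ZMod.castHom (Dvd.intro q h) (ZMod n) x = 0 := by
  obtain ⟨x, rfl⟩ := ZMod.intCast_surjective x
  rw [map_intCast, ZMod.intCast_zmod_eq_zero_iff_dvd, ← Int.cast_natCast, ← Int.cast_mul,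
    ZMod.intCast_zmod_eq_zero_iff_dvd, ← h, Nat.cast_mul, mul_comm (n : ℤ),
    mul_dvd_mul_iff_left (Nat.cast_ne_zero.2 hq)]

theorem card_ker_castHom [NeZero N] (h : n * q = N) :
    Nat.card (RingHom.ker (ZMod.castHom (Dvd.intro q h) (ZMod n))) = q := by
  have card_mul := card_ker_mul_card_of_surjective
    (f := (ZMod.castHom (Dvd.intro q h) (ZMod n)).toAddMonoidHom)
    (ZMod.castHom_surjective (Dvd.intro q h))
  have hn : 0 < n := Nat.pos_of_ne_zero (left_ne_zero_of_mul (h ▸ NeZero.ne N))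
  rw [Nat.card_zmod, Nat.card_zmod] at card_mul
  exact Nat.eq_of_mul_eq_mul_right hn (card_mul.trans (by rw [← h, mul_comm]))

theorem castHom_eq_zero_iff_isNilpotent {p : ℕ} [Fact p.Prime] {l : ℕ} (x : ZMod (p ^ (l + 1))) :
    ZMod.castHom (dvd_pow_self p l.succ_ne_zero) (ZMod p) x = 0 ↔ IsNilpotent x := by
  refine ⟨fun hx => ?_, fun hx => (hx.map _).eq_zero⟩
  obtain ⟨y, rfl⟩ := (castHom_eq_zero_iff_natCast_dvd _ x).1 hx
  exact ⟨l + 1, by rw [mul_pow, ← Nat.cast_pow, ZMod.natCast_self, zero_mul]⟩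

end Reduction

/-- The number of representations of `c` by the integral polynomial `F` over the ring `R`; it is
meant for finite `R`, since infinitely many representations are counted as `0`. -/
noncomputable def numReps {σ R : Type*} [CommRing R] (F : MvPolynomial σ ℤ) (c : R) : ℕ :=
  Nat.card {v : σ → R // aeval v F = c}

/-- `F` is nonsingular over `K` if its partial derivatives have no common zero in `K` apart from
the origin. -/
def IsNonsingularOver {σ : Type*} (F : MvPolynomial σ ℤ) (K : Type*) [CommRing K] : Prop :=
  ∀ w : σ → K, w ≠ 0 → ∃ i, aeval w (pderiv i F) ≠ 0

section Recursion

variable {σ : Type*} {F : MvPolynomial σ ℤ} {d : ℕ}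

theorem aeval_smul_eq_iff_aeval_castHom_comp {N n q : ℕ} (h : n * q ^ d = N) (hq : q ^ d ≠ 0)
    (hF : F.IsHomogeneous d) (u : σ → ZMod N) (m : ℕ) :
    aeval ((q : ZMod N) • u) F = ((q ^ d * m : ℕ) : ZMod N) ↔
      aeval (ZMod.castHom (Dvd.intro _ h) (ZMod n) ∘ u) F = (m : ZMod n) := by
  have scaled_difference : aeval ((q : ZMod N) • u) F - ((q ^ d * m : ℕ) : ZMod N) =
      ((q ^ d : ℕ) : ZMod N) * (aeval u F - (m : ZMod N)) := by
    rw [aeval_smul_of_isHomogeneous hF]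
    push_cast
    ring
  rw [← sub_eq_zero, scaled_difference, natCast_mul_eq_zero_iff_castHom h hq, map_sub,
    map_natCast, sub_eq_zero, map_aeval_int]

variable [Fintype σ]

theorem card_imprimitive_reps {N n q : ℕ} [NeZero N] (h : n * q ^ (d + 1) = N)
    (hF : F.IsHomogeneous (d + 1)) (m : ℕ) :
    Nat.card {v : σ → ZMod N // (∀ i, (q : ZMod N) ∣ v i) ∧
        aeval v F = ((q ^ (d + 1) * m : ℕ) : ZMod N)} =
      (q ^ d) ^ Fintype.card σ * numReps F (m : ZMod n) := by
  have hq : q ≠ 0 := by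
    rintro rfl
    exact NeZero.ne N (by simp [← h])
  have hN : n * q ^ d * q = N := by rw [← h, pow_succ, mul_assoc]
  let scale : (σ → ZMod N) →+ (σ → ZMod N) := DistribSMul.toAddMonoidHom _ (q : ZMod N)
  let reduce : (σ → ZMod N) →+ (σ → ZMod n) :=
    (ZMod.castHom (Dvd.intro _ h) (ZMod n)).toAddMonoidHom.compLeft σ
  have card_ker_scale : Nat.card scale.ker = q ^ Fintype.card σ := by
    rw [← card_ker_castHom hN, ← card_subtype_comp_eq (ZMod.castHom_surjective _) 0]
    refine Nat.card_congr (Equiv.subtypeEquivRight fun u => ?_)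
    simp [scale, funext_iff, AddMonoidHom.mem_ker, natCast_mul_eq_zero_iff_castHom hN hq]
  have card_ker_reduce : Nat.card reduce.ker = (q ^ (d + 1)) ^ Fintype.card σ := by
    rw [← card_ker_castHom h, ← card_subtype_comp_eq (ZMod.castHom_surjective _) 0]
    rfl
  have mem_range_scale (v : σ → ZMod N) : v ∈ scale.range ↔ ∀ i, (q : ZMod N) ∣ v i := by
    simp [AddMonoidHom.mem_range, scale, funext_iff, dvd_def, Classical.skolem, eq_comm]
  have reduce_surjective : Function.Surjective reduce :=
    (ZMod.castHom_surjective (Dvd.intro _ h)).comp_left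
  have aeval_scale (u : σ → ZMod N) : aeval (scale u) F = ((q ^ (d + 1) * m : ℕ) : ZMod N) ↔
      aeval (reduce u) F = (m : ZMod n) :=
    aeval_smul_eq_iff_aeval_castHom_comp h (pow_ne_zero _ hq) hF u m
  have count_via_scale := card_subtype_comp_addMonoidHom scale
    (fun v => aeval v F = ((q ^ (d + 1) * m : ℕ) : ZMod N))
  have count_via_reduce := card_subtype_comp_addMonoidHom reduce
    (fun v => aeval v F = (m : ZMod n))
  simp only [aeval_scale, mem_range_scale, card_ker_scale] at count_via_scale
  simp only [AddMonoidHom.range_eq_top.2 reduce_surjective, AddSubgroup.mem_top, true_and,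
    card_ker_reduce] at count_via_reduce
  refine Nat.eq_of_mul_eq_mul_left (pow_pos (Nat.pos_of_ne_zero hq) (Fintype.card σ)) ?_
  rw [← count_via_scale, count_via_reduce, numReps, pow_succ', mul_pow, mul_assoc]

end Recursion

theorem card_subtype_eq_card_and_add_card_not_and {α : Type*} [Finite α] (P Q : α → Prop) :
    Nat.card {x // Q x} = Nat.card {x // P x ∧ Q x} + Nat.card {x // ¬ P x ∧ Q x} := by
  simp only [and_comm (b := Q _)]
  exact (Set.ncard_inter_add_ncard_sdiff_eq_ncard {x | Q x} {x | P x}).symm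

section PrimePower

variable {σ : Type*} {F : MvPolynomial σ ℤ} {d p : ℕ} [Fact p.Prime]

theorem aeval_zero_of_isHomogeneous_succ {R : Type*} [CommRing R] (hF : F.IsHomogeneous (d + 1)) :
    aeval (0 : σ → R) F = 0 := by
  simpa using aeval_smul_of_isHomogeneous hF (0 : R) 0

theorem castHom_comp_eq_zero_iff {N n : ℕ} (h : n ∣ N) (v : σ → ZMod N) :
    ZMod.castHom h (ZMod n) ∘ v = 0 ↔ ∀ i, (n : ZMod N) ∣ v i := by
  simp only [funext_iff, Function.comp_apply, Pi.zero_apply, castHom_eq_zero_iff_natCast_dvd]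

theorem card_ne_zero_reps_zero_add_one {R : Type*} [CommRing R] [Finite σ] [Finite R]
    (hF : F.IsHomogeneous (d + 1)) :
    Nat.card {w : σ → R // w ≠ 0 ∧ aeval w F = 0} + 1 = numReps F (0 : R) := by
  have card_zero : Nat.card {w : σ → R // w = 0 ∧ aeval w F = 0} = 1 :=
    Nat.card_eq_one_iff_exists.2
      ⟨⟨0, rfl, aeval_zero_of_isHomogeneous_succ hF⟩, fun w => Subtype.ext w.2.1⟩
  rw [numReps, card_subtype_eq_card_and_add_card_not_and (· = 0) fun w : σ → R => aeval w F = 0,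
    card_zero, add_comm]

variable [Fintype σ]

theorem card_primitive_reps (hF : IsNonsingularOver F (ZMod p)) {l : ℕ} (c : ZMod (p ^ (l + 1))) :
    Nat.card {v : σ → ZMod (p ^ (l + 1)) // (¬ ∀ i, (p : ZMod (p ^ (l + 1))) ∣ v i) ∧
        aeval v F = c} =
      (p ^ l) ^ (Fintype.card σ - 1) * Nat.card {w : σ → ZMod p // w ≠ 0 ∧
        aeval w F = ZMod.castHom (dvd_pow_self p l.succ_ne_zero) (ZMod p) c} := by
  have nonsingular_of_ne_zero (w : σ → ZMod p) (hw : w ≠ 0) :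
      ∃ i, IsUnit (aeval w (pderiv i F)) := by
    simpa only [isUnit_iff_ne_zero] using hF w hw
  simp only [← castHom_comp_eq_zero_iff (dvd_pow_self p l.succ_ne_zero)]
  rw [← card_ker_castHom (n := p) (q := p ^ l) (pow_succ' p l).symm]
  exact card_nonsingular_lifts (ZMod.castHom_surjective _) castHom_eq_zero_iff_isNilpotent
    nonsingular_of_ne_zero c

theorem numReps_of_castHom_ne_zero (hF : F.IsHomogeneous (d + 1))
    (hsing : IsNonsingularOver F (ZMod p)) {l : ℕ} {c : ZMod (p ^ (l + 1))}
    (hc : ZMod.castHom (dvd_pow_self p l.succ_ne_zero) (ZMod p) c ≠ 0) :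
    numReps F c = (p ^ l) ^ (Fintype.card σ - 1) *
      numReps F (ZMod.castHom (dvd_pow_self p l.succ_ne_zero) (ZMod p) c) := by
  have primitive_of_rep {v : σ → ZMod (p ^ (l + 1))} (hv : aeval v F = c) :
      ¬ ∀ i, (p : ZMod (p ^ (l + 1))) ∣ v i := by
    rw [← castHom_comp_eq_zero_iff (dvd_pow_self p l.succ_ne_zero)]
    intro hv0
    apply hc
    rw [← hv, map_aeval_int, hv0, aeval_zero_of_isHomogeneous_succ hF]
  have ne_zero_of_rep {w : σ → ZMod p}
      (hw : aeval w F = ZMod.castHom (dvd_pow_self p l.succ_ne_zero) (ZMod p) c) : w ≠ 0 := by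
    rintro rfl
    exact hc (by rw [← hw, aeval_zero_of_isHomogeneous_succ hF])
  simpa only [numReps, and_iff_right_of_imp primitive_of_rep, and_iff_right_of_imp ne_zero_of_rep]
    using card_primitive_reps hsing c

theorem numReps_pow_mul_add (hF : F.IsHomogeneous (d + 1))
    (hsing : IsNonsingularOver F (ZMod p)) (l m : ℕ) :
    numReps F ((p ^ (d + 1) * m : ℕ) : ZMod (p ^ (l + d + 1))) +
        (p ^ (l + d)) ^ (Fintype.card σ - 1) =
      (p ^ (l + d)) ^ (Fintype.card σ - 1) * numReps F (0 : ZMod p) +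
        (p ^ d) ^ Fintype.card σ * numReps F (m : ZMod (p ^ l)) := by
  have reduction_eq_zero : ZMod.castHom (dvd_pow_self p (l + d).succ_ne_zero) (ZMod p)
      ((p ^ (d + 1) * m : ℕ) : ZMod (p ^ (l + d + 1))) = 0 := by
    simp
  rw [numReps,
    card_subtype_eq_card_and_add_card_not_and fun v => ∀ i, (p : ZMod (p ^ (l + d + 1))) ∣ v i,
    card_imprimitive_reps (N := p ^ (l + d + 1)) (pow_add p l (d + 1)).symm hF,
    card_primitive_reps hsing, reduction_eq_zero, ← card_ne_zero_reps_zero_add_one hF]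
  ring

end PrimePower

theorem card_subtype_prod {α β : Type*} [Finite α] [Fintype β] (P : α → β → Prop) :
    Nat.card {x : α × β // P x.1 x.2} = ∑ b, Nat.card {a // P a b} := by
  have swap : {x : α × β // P x.1 x.2} ≃ {x : β × α // P x.2 x.1} :=
    (Equiv.prodComm α β).subtypeEquiv fun _ => Iff.rfl
  rw [Nat.card_congr swap, Nat.card_congr (Equiv.subtypeProdEquivSigmaSubtype fun b a => P a b),
    Nat.card_sigma]

section FiniteField

variable {K ι : Type*} [Field K] [Fintype K] [Fintype ι]

theorem card_dotProduct_eq_mul_card {v : ι → K} (hv : v ≠ 0) (c : K) :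
    Nat.card {u : ι → K // u ⬝ᵥ v = c} * Fintype.card K = Fintype.card K ^ Fintype.card ι := by
  classical
  obtain ⟨i, hi⟩ := Function.ne_iff.1 hv
  let pairing : (ι → K) →+ K := ((dotProductBilin K K).flip v).toAddMonoidHom
  have pairing_surjective : Function.Surjective pairing := fun c =>
    ⟨Pi.single i (c / v i), by simpa [pairing] using div_mul_cancel₀ c hi⟩
  rw [← Fintype.card_fun, ← Nat.card_eq_fintype_card (α := K),
    ← Nat.card_eq_fintype_card (α := ι → K)]
  exact card_fiber_mul_card_of_surjective pairing_surjective c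

variable [DecidableEq K]

theorem natCard_sqrts_eq_quadraticChar_add_one (hK : ringChar K ≠ 2) (t : K) :
    (Nat.card {x : K // x ^ 2 = t} : ℤ) = quadraticChar K t + 1 := by
  rw [← quadraticChar_card_sqrts hK, Set.toFinset_card, Nat.card_eq_fintype_card]
  rfl

theorem sum_comp_sq (hK : ringChar K ≠ 2) (f : K → ℤ) :
    ∑ y, f (y ^ 2) = ∑ t, (quadraticChar K t + 1) * f t := by
  rw [← Finset.sum_fiberwise' Finset.univ (· ^ 2) f]
  refine Finset.sum_congr rfl fun t _ => ?_
  rw [Finset.sum_const, nsmul_eq_mul, ← natCard_sqrts_eq_quadraticChar_add_one hK,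
    Nat.card_eq_fintype_card, Fintype.card_subtype]

theorem sum_quadraticChar_affine (hK : ringChar K ≠ 2) (b : K) {c : K} (hc : c ≠ 0) :
    ∑ t, quadraticChar K (b + c * t) = 0 := by
  rw [← quadraticChar_sum_zero hK,
    ← Equiv.sum_comp ((Equiv.mulLeft₀ c hc).trans (Equiv.addLeft b)) (quadraticChar K)]
  rfl

-- For `t ≠ 0` we have `χ t = χ t⁻¹`, so `χ t * χ (c + b * t) = χ (b + c * t⁻¹)`.
theorem sum_quadraticChar_mul_quadraticChar_affine (hK : ringChar K ≠ 2) (b c : K) :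
    ∑ t, quadraticChar K t * quadraticChar K (c + b * t) =
      quadraticChar K b * (Fintype.card K * (if c = 0 then 1 else 0) - 1) := by
  have term_eq (t : K) : quadraticChar K t * quadraticChar K (c + b * t) =
      quadraticChar K (b + c * t⁻¹) - if t = 0 then quadraticChar K b else 0 := by
    obtain rfl | ht := eq_or_ne t 0
    · simp
    · have factor : t * (c + b * t) = t ^ 2 * (b + c * t⁻¹) := by field_simp; ring
      rw [← map_mul, factor, map_mul, quadraticChar_sq_one' ht, one_mul, if_neg ht, sub_zero]
  have sum_inv : ∑ t, quadraticChar K (b + c * t⁻¹) = ∑ t, quadraticChar K (b + c * t) :=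
    Equiv.sum_comp (Equiv.inv K) fun t => quadraticChar K (b + c * t)
  simp only [term_eq, Finset.sum_sub_distrib, Finset.sum_ite_eq', Finset.mem_univ, if_true, sum_inv]
  obtain rfl | hc := eq_or_ne c 0
  · simp only [zero_mul, add_zero, Finset.sum_const, Finset.card_univ, nsmul_eq_mul, if_true]
    ring
  · rw [sum_quadraticChar_affine hK b hc, if_neg hc]
    ring

theorem card_sq_sub_mul_sq_eq (hK : ringChar K ≠ 2) {b : K} (hb : b ≠ 0) (c : K) :
    (Nat.card {v : K × K // v.1 ^ 2 - b * v.2 ^ 2 = c} : ℤ) = Fintype.card K +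
      quadraticChar K b * (Fintype.card K * (if c = 0 then 1 else 0) - 1) := by
  rw [card_subtype_prod fun x y => x ^ 2 - b * y ^ 2 = c, Nat.cast_sum]
  simp only [sub_eq_iff_eq_add, natCard_sqrts_eq_quadraticChar_add_one hK]
  rw [sum_comp_sq hK fun t => quadraticChar K (c + b * t) + 1]
  simp only [add_mul, mul_add, one_mul, mul_one, Finset.sum_add_distrib,
    sum_quadraticChar_mul_quadraticChar_affine hK, sum_quadraticChar_affine hK c hb,
    quadraticChar_sum_zero hK, Finset.sum_const, Finset.card_univ, nsmul_eq_mul]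
  ring

theorem card_dotProduct_pairs_eq_mul_card (c : K) :
    (Nat.card {v : (ι → K) × (ι → K) // v.1 ⬝ᵥ v.2 = c} : ℤ) * Fintype.card K =
      Fintype.card K ^ (2 * Fintype.card ι) - Fintype.card K ^ Fintype.card ι +
        Fintype.card K ^ (Fintype.card ι + 1) * if c = 0 then 1 else 0 := by
  classical
  have fiber_zero : (Nat.card {u : ι → K // u ⬝ᵥ 0 = c} : ℤ) =
      Fintype.card K ^ Fintype.card ι * if c = 0 then 1 else 0 := by
    obtain rfl | hc := eq_or_ne c 0
    · simp
    · simp [hc, hc.symm]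
  rw [card_subtype_prod fun u v : ι → K => u ⬝ᵥ v = c, Nat.cast_sum, Finset.sum_mul,
    ← Finset.add_sum_erase _ _ (Finset.mem_univ 0), fiber_zero]
  have sum_nonzero := Finset.sum_congr rfl fun v (hv : v ∈ Finset.univ.erase (0 : ι → K)) =>
    congrArg (Nat.cast (R := ℤ)) (card_dotProduct_eq_mul_card (Finset.ne_of_mem_erase hv) c)
  push_cast at sum_nonzero
  rw [sum_nonzero, Finset.sum_erase_eq_sub (Finset.mem_univ _), Finset.sum_const,
    Finset.card_univ, Fintype.card_fun]
  ring

end FiniteField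

/-- The quadratic form `x₀² - Δ x₁² + ∑ i, yᵢ₀ yᵢ₁`: the orthogonal sum of the norm form of
`x₀ + x₁ √Δ` and of one hyperbolic plane for each element of `ι`. The variables `x` are indexed by
the left summand and the variables `y` by the right one. -/
noncomputable def quasiSplitForm (Δ : ℤ) (ι : Type*) [Fintype ι] :
    MvPolynomial (Fin 2 ⊕ ι × Fin 2) ℤ :=
  X (.inl 0) ^ 2 - C Δ * X (.inl 1) ^ 2 + ∑ i, X (.inr (i, 0)) * X (.inr (i, 1))

section QuasiSplitForm

variable (Δ : ℤ) (ι : Type*) [Fintype ι]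

theorem aeval_quasiSplitForm {R : Type*} [CommRing R] (v : Fin 2 ⊕ ι × Fin 2 → R) :
    aeval v (quasiSplitForm Δ ι) = v (.inl 0) ^ 2 - Δ * v (.inl 1) ^ 2 +
      ∑ i, v (.inr (i, 0)) * v (.inr (i, 1)) := by
  simp [quasiSplitForm]

theorem isHomogeneous_quasiSplitForm : (quasiSplitForm Δ ι).IsHomogeneous 2 := by
  have sq_X (j : Fin 2) :
      (X (.inl j) ^ 2 : MvPolynomial (Fin 2 ⊕ ι × Fin 2) ℤ).IsHomogeneous 2 := by
    simpa using (isHomogeneous_X ℤ (Sum.inl j)).pow 2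
  have C_mul_sq_X : (C Δ * X (.inl 1) ^ 2 : MvPolynomial (Fin 2 ⊕ ι × Fin 2) ℤ).IsHomogeneous 2 :=
    (isHomogeneous_C _ Δ).mul (sq_X 1)
  have mul_X (i : ι) : (X (.inr (i, 0)) * X (.inr (i, 1)) :
      MvPolynomial (Fin 2 ⊕ ι × Fin 2) ℤ).IsHomogeneous 2 :=
    (isHomogeneous_X ℤ _).mul (isHomogeneous_X ℤ _)
  exact ((sq_X 0).sub C_mul_sq_X).add (IsHomogeneous.sum _ _ _ fun i _ => mul_X i)

variable {K : Type*} [Field K]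

theorem isNonsingularOver_quasiSplitForm (h2 : (2 : K) ≠ 0) (hΔ : (Δ : K) ≠ 0) :
    IsNonsingularOver (quasiSplitForm Δ ι) K := by
  classical
  intro w hw
  contrapose! hw
  funext j
  rcases j with j | ⟨i, j⟩
  · have pderiv_eq_zero := hw (.inl j)
    fin_cases j <;> simpa [quasiSplitForm, pderiv_X, Pi.single_apply, h2, hΔ] using pderiv_eq_zero
  · have pderiv_eq_zero := hw (.inr (i, 1 - j))
    fin_cases j <;> simpa [quasiSplitForm, pderiv_X, Pi.single_apply] using pderiv_eq_zero

theorem numReps_quasiSplitForm [Fintype K] [DecidableEq K] (hK : ringChar K ≠ 2)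
    (hΔ : (Δ : K) ≠ 0) (c : K) :
    (numReps (quasiSplitForm Δ ι) c : ℤ) = Fintype.card K ^ (2 * Fintype.card ι + 1) +
      quadraticChar K Δ * Fintype.card K ^ Fintype.card ι *
        (Fintype.card K * (if c = 0 then 1 else 0) - 1) := by
  classical
  let splitCoordinates : (Fin 2 ⊕ ι × Fin 2 → K) ≃ (K × K) × (ι → K) × (ι → K) :=
    (Equiv.sumArrowEquivProdArrow _ _ _).trans <|
      (finTwoArrowEquiv K).prodCongr <|
        (Equiv.arrowCongr (Equiv.prodComm _ _) (Equiv.refl K)).trans <|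
        (Equiv.curry (Fin 2) ι K).trans (finTwoArrowEquiv (ι → K))
  have rep_iff (v : Fin 2 ⊕ ι × Fin 2 → K) : aeval v (quasiSplitForm Δ ι) = c ↔
      (splitCoordinates v).1.1 ^ 2 - Δ * (splitCoordinates v).1.2 ^ 2 =
        c - (splitCoordinates v).2.1 ⬝ᵥ (splitCoordinates v).2.2 := by
    rw [aeval_quasiSplitForm, eq_sub_iff_add_eq]
    rfl
  rw [numReps, Nat.card_congr (splitCoordinates.subtypeEquiv
      (q := fun x => x.1.1 ^ 2 - Δ * x.1.2 ^ 2 = c - x.2.1 ⬝ᵥ x.2.2) rep_iff),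
    card_subtype_prod fun (b : K × K) (h : (ι → K) × (ι → K)) =>
      b.1 ^ 2 - Δ * b.2 ^ 2 = c - h.1 ⬝ᵥ h.2, Nat.cast_sum]
  have count_hyperbolic : ∑ h : (ι → K) × (ι → K), (if c - h.1 ⬝ᵥ h.2 = 0 then 1 else 0 : ℤ) =
      Nat.card {h : (ι → K) × (ι → K) // h.1 ⬝ᵥ h.2 = c} := by
    simp [sub_eq_zero, Fintype.card_subtype, eq_comm]
  simp only [card_sq_sub_mul_sq_eq hK hΔ, Finset.sum_add_distrib, ← Finset.mul_sum,
    Finset.sum_sub_distrib, count_hyperbolic, Finset.sum_const, Finset.card_univ,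
    Fintype.card_prod, Fintype.card_fun, nsmul_eq_mul, Nat.cast_mul, Nat.cast_pow]
  linear_combination quadraticChar K Δ * card_dotProduct_pairs_eq_mul_card (ι := ι) c

end QuasiSplitForm

section DoubleSeries

variable {𝕜 : Type*} [NormedField 𝕜] {a z r α β γ δ : 𝕜}

theorem hasSum_base_row (hrz : ‖r * z‖ < 1) {f : ℕ → 𝕜} (h0 : f 0 = 1)
    (hf : ∀ l, f (l + 1) = β * r ^ l) :
    HasSum (fun l => z ^ l * f l) (1 + β * z / (1 - r * z)) := by
  have tail_eq (l : ℕ) : z ^ (l + 1) * f (l + 1) = β * z * (r * z) ^ l := by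
    rw [hf]
    ring
  have tail : HasSum (fun l => z ^ (l + 1) * f (l + 1)) (β * z / (1 - r * z)) := by
    simp only [tail_eq, div_eq_mul_inv]
    exact (hasSum_geometric_of_norm_lt_one hrz).mul_left (β * z)
  have total := (hasSum_nat_add_iff (f := fun l => z ^ l * f l) 1).1 tail
  rwa [Finset.sum_range_one, h0, pow_zero, one_mul, add_comm] at total

theorem hasSum_succ_row (hrz : ‖r * z‖ < 1) {f g : ℕ → 𝕜} {s : 𝕜}
    (hg : HasSum (fun l => z ^ l * g l) s) (h0 : f 0 = 1) (h1 : f 1 = α)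
    (hf : ∀ l, f (l + 2) = γ * r ^ l + δ * g l) :
    HasSum (fun l => z ^ l * f l) (1 + α * z + γ * z ^ 2 / (1 - r * z) + δ * z ^ 2 * s) := by
  have tail_eq (l : ℕ) : z ^ (l + 2) * f (l + 2) =
      γ * z ^ 2 * (r * z) ^ l + δ * z ^ 2 * (z ^ l * g l) := by
    rw [hf]
    ring
  have tail : HasSum (fun l => z ^ (l + 2) * f (l + 2))
      (γ * z ^ 2 / (1 - r * z) + δ * z ^ 2 * s) := by
    simp only [tail_eq, div_eq_mul_inv]
    exact ((hasSum_geometric_of_norm_lt_one hrz).mul_left _).add (hg.mul_left _)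
  have total := (hasSum_nat_add_iff (f := fun l => z ^ l * f l) 2).1 tail
  have value_eq : γ * z ^ 2 / (1 - r * z) + δ * z ^ 2 * s + ∑ l ∈ Finset.range 2, z ^ l * f l =
      1 + α * z + γ * z ^ 2 / (1 - r * z) + δ * z ^ 2 * s := by
    rw [Finset.sum_range_succ, Finset.sum_range_one, h0, h1]
    ring
  rwa [value_eq] at total

theorem hasSum_of_affine_recursion (ha : ‖a‖ < 1) {b c : 𝕜} (hab : 1 - a * b ≠ 0)
    {f : ℕ → 𝕜} (hsum : Summable fun T => a ^ T * f T) (hf : ∀ T, f (T + 1) = c + b * f T) :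
    HasSum (fun T => a ^ T * f T) ((f 0 + a / (1 - a) * c) / (1 - a * b)) := by
  obtain ⟨s, hs⟩ := hsum
  have tail_eq (T : ℕ) : a ^ (T + 1) * f (T + 1) = a * c * a ^ T + a * b * (a ^ T * f T) := by
    rw [hf]
    ring
  have tail : HasSum (fun T => a ^ (T + 1) * f (T + 1)) (a * c * (1 - a)⁻¹ + a * b * s) := by
    simp only [tail_eq]
    exact ((hasSum_geometric_of_norm_lt_one ha).mul_left _).add (hs.mul_left _)
  have total := (hasSum_nat_add_iff (f := fun T => a ^ T * f T) 1).1 tail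
  rw [Finset.sum_range_one, pow_zero, one_mul] at total
  have value_eq : s = (f 0 + a / (1 - a) * c) / (1 - a * b) := by
    rw [eq_div_iff hab, div_eq_mul_inv]
    linear_combination hs.unique total
  rwa [value_eq] at hs

variable [CompleteSpace 𝕜] {u : ℕ → ℕ → 𝕜}

theorem summable_pow_mul_pow_mul (ha : ‖a‖ < 1) (hz : ‖z‖ < 1) (hu : ∀ T l, ‖u T l‖ ≤ 1) :
    Summable fun Tl : ℕ × ℕ => a ^ Tl.1 * z ^ Tl.2 * u Tl.1 Tl.2 := by
  have geometric : Summable fun Tl : ℕ × ℕ => ‖a‖ ^ Tl.1 * ‖z‖ ^ Tl.2 :=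
    (summable_geometric_of_lt_one (norm_nonneg a) ha).mul_of_nonneg
      (summable_geometric_of_lt_one (norm_nonneg z) hz) (fun _ => by positivity)
      (fun _ => by positivity)
  refine geometric.of_norm_bounded fun Tl => ?_
  rw [norm_mul, norm_mul, norm_pow, norm_pow]
  exact mul_le_of_le_one_right (by positivity) (hu _ _)

theorem hasSum_of_double_recursion (ha : ‖a‖ < 1) (hz : ‖z‖ < 1) (hrz : ‖r * z‖ < 1)
    (hδ : 1 - a * (δ * z ^ 2) ≠ 0) (hu : ∀ T l, ‖u T l‖ ≤ 1) (h0 : ∀ T, u T 0 = 1)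
    (hbase : ∀ l, u 0 (l + 1) = β * r ^ l) (h1 : ∀ T, u (T + 1) 1 = α)
    (hrec : ∀ T l, u (T + 1) (l + 2) = γ * r ^ l + δ * u T l) :
    HasSum (fun Tl : ℕ × ℕ => a ^ Tl.1 * z ^ Tl.2 * u Tl.1 Tl.2)
      ((1 + β * z / (1 - r * z) + a / (1 - a) * (1 + α * z + γ * z ^ 2 / (1 - r * z))) /
        (1 - a * (δ * z ^ 2))) := by
  have summable_double := summable_pow_mul_pow_mul ha hz hu
  have summable_row (T : ℕ) : Summable fun l => z ^ l * u T l := by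
    refine (summable_geometric_of_lt_one (norm_nonneg z) hz).of_norm_bounded fun l => ?_
    rw [norm_mul, norm_pow]
    exact mul_le_of_le_one_right (by positivity) (hu _ _)
  have hasSum_weighted_row (T : ℕ) :
      HasSum (fun l => a ^ T * z ^ l * u T l) (a ^ T * ∑' l, z ^ l * u T l) := by
    simp only [mul_assoc]
    exact (summable_row T).hasSum.mul_left _
  have row_zero : ∑' l, z ^ l * u 0 l = 1 + β * z / (1 - r * z) :=
    (hasSum_base_row hrz (h0 0) hbase).tsum_eq
  have row_succ (T : ℕ) : ∑' l, z ^ l * u (T + 1) l =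
      1 + α * z + γ * z ^ 2 / (1 - r * z) + δ * z ^ 2 * ∑' l, z ^ l * u T l :=
    (hasSum_succ_row hrz (summable_row T).hasSum (h0 _) (h1 T) (hrec T)).tsum_eq
  have sum_of_rows := summable_double.hasSum.prod_fiberwise hasSum_weighted_row
  rw [← row_zero, (hasSum_of_affine_recursion ha hδ sum_of_rows.summable row_succ).unique
    sum_of_rows]
  exact summable_double.hasSum

end DoubleSeries

theorem norm_div_natCast_le {𝕜 : Type*} [RCLike 𝕜] (n : ℕ) (x : 𝕜) : ‖x / n‖ ≤ ‖x‖ := by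
  rw [norm_div, RCLike.norm_natCast, div_eq_mul_inv]
  exact mul_le_of_le_one_right (norm_nonneg x) (Nat.cast_inv_le_one n)

/-- The proportion of the vectors over the finite ring `R` that represent `c` by `F`, as an element
of the field `𝕜`. -/
noncomputable def repDensity (𝕜 : Type*) [Field 𝕜] {σ R : Type*} [Fintype σ] [CommRing R]
    (F : MvPolynomial σ ℤ) (c : R) : 𝕜 :=
  numReps F c / Nat.card R ^ Fintype.card σ

section RepDensity

variable {𝕜 : Type*} [RCLike 𝕜] {σ : Type*} [Fintype σ] {F : MvPolynomial σ ℤ} {p : ℕ}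

theorem norm_repDensity_le_one {R : Type*} [CommRing R] [Finite R] (c : R) :
    ‖repDensity 𝕜 F c‖ ≤ 1 := by
  have numReps_le : numReps F c ≤ Nat.card R ^ Fintype.card σ := by
    simpa only [numReps, Nat.card_fun, Nat.card_eq_fintype_card (α := σ)] using
      Nat.card_le_card_of_injective _ (Subtype.val_injective (p := fun v => aeval v F = c))
  rw [repDensity, norm_div, norm_pow, RCLike.norm_natCast, RCLike.norm_natCast]
  exact div_le_one_of_le₀ (mod_cast numReps_le) (by positivity)

theorem repDensity_of_subsingleton {R : Type*} [CommRing R] [Subsingleton R] (c : R) :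
    repDensity 𝕜 F c = 1 := by
  have numReps_eq_one : numReps F c = 1 :=
    Nat.card_eq_one_iff_exists.2 ⟨⟨0, Subsingleton.elim _ _⟩, fun _ => Subsingleton.elim _ _⟩
  rw [repDensity, numReps_eq_one, Nat.card_of_subsingleton c, Nat.cast_one, one_pow, div_one]

variable [Fact p.Prime] [Nonempty σ] {d : ℕ}

theorem repDensity_of_castHom_ne_zero (hF : F.IsHomogeneous (d + 1))
    (hsing : IsNonsingularOver F (ZMod p)) {l : ℕ} {c : ZMod (p ^ (l + 1))}
    (hc : ZMod.castHom (dvd_pow_self p l.succ_ne_zero) (ZMod p) c ≠ 0) :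
    repDensity 𝕜 F c =
      repDensity 𝕜 F (ZMod.castHom (dvd_pow_self p l.succ_ne_zero) (ZMod p) c) * (1 / p) ^ l := by
  have hp : (p : 𝕜) ≠ 0 := mod_cast (Fact.out : p.Prime).ne_zero
  obtain ⟨n, hn⟩ := Nat.exists_eq_succ_of_ne_zero (Fintype.card_ne_zero (α := σ))
  rw [repDensity, repDensity, numReps_of_castHom_ne_zero hF hsing hc, Nat.card_zmod,
    Nat.card_zmod, hn]
  simp only [one_div_pow, Nat.succ_eq_add_one, Nat.add_sub_cancel]
  push_cast
  field_simp
  ring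

theorem repDensity_pow_mul (hF : F.IsHomogeneous (d + 1))
    (hsing : IsNonsingularOver F (ZMod p)) (l m : ℕ) :
    repDensity 𝕜 F ((p ^ (d + 1) * m : ℕ) : ZMod (p ^ (l + d + 1))) =
      (repDensity 𝕜 F (0 : ZMod p) - 1 / p ^ Fintype.card σ) * (1 / p) ^ (l + d) +
        1 / p ^ Fintype.card σ * repDensity 𝕜 F (m : ZMod (p ^ l)) := by
  have hp : (p : 𝕜) ≠ 0 := mod_cast (Fact.out : p.Prime).ne_zero
  have recursion := congrArg (Nat.cast (R := 𝕜)) (numReps_pow_mul_add hF hsing l m)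
  obtain ⟨n, hn⟩ := Nat.exists_eq_succ_of_ne_zero (Fintype.card_ne_zero (α := σ))
  rw [hn] at recursion
  simp only [repDensity, Nat.card_zmod, hn, one_div_pow]
  push_cast [Nat.succ_eq_add_one] at recursion ⊢
  rw [← eq_sub_iff_add_eq] at recursion
  rw [recursion]
  field_simp
  ring

theorem hasSum_repDensity (hF : F.IsHomogeneous 2) (hsing : IsNonsingularOver F (ZMod p))
    {a z : 𝕜} (ha : ‖a‖ < 1) (hz : ‖z‖ < 1) :
    HasSum
      (fun Tl : ℕ × ℕ =>
        a ^ Tl.1 * z ^ Tl.2 * repDensity 𝕜 F ((p ^ (2 * Tl.1) : ℕ) : ZMod (p ^ Tl.2)))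
      ((1 + repDensity 𝕜 F (1 : ZMod p) * z / (1 - z / p) +
          a / (1 - a) * (1 + repDensity 𝕜 F (0 : ZMod p) * z +
            (repDensity 𝕜 F (0 : ZMod p) - 1 / p ^ Fintype.card σ) / p * z ^ 2 / (1 - z / p))) /
        (1 - a * (z ^ 2 / p ^ Fintype.card σ))) := by
  have norm_ratio_lt_one : ‖z / p‖ < 1 := (norm_div_natCast_le p z).trans_lt hz
  have norm_sq_div_le_one : ‖z ^ 2 / (p : 𝕜) ^ Fintype.card σ‖ ≤ 1 := by
    rw [← Nat.cast_pow]
    exact (norm_div_natCast_le _ _).trans (norm_pow z 2 ▸ pow_le_one₀ (norm_nonneg z) hz.le)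
  have denominator_ne_zero : 1 - a * (z ^ 2 / p ^ Fintype.card σ) ≠ 0 :=
    (isUnit_one_sub_of_norm_lt_one <| by
      rw [norm_mul]
      exact mul_lt_one_of_nonneg_of_lt_one_left (norm_nonneg a) ha norm_sq_div_le_one).ne_zero
  have residue_base (l : ℕ) : ZMod.castHom (dvd_pow_self p l.succ_ne_zero) (ZMod p)
      ((p ^ (2 * 0) : ℕ) : ZMod (p ^ (l + 1))) = 1 := by simp
  rw [← one_div_mul_eq_div (p : 𝕜) z] at norm_ratio_lt_one ⊢
  rw [← one_div_mul_eq_div _ (z ^ 2)] at denominator_ne_zero ⊢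
  refine hasSum_of_double_recursion ha hz norm_ratio_lt_one denominator_ne_zero
    (u := fun T l => repDensity 𝕜 F ((p ^ (2 * T) : ℕ) : ZMod (p ^ l)))
    (fun T l => norm_repDensity_le_one _) (fun T => ?_) (fun l => ?_) (fun T => ?_) fun T l => ?_
  · have : Subsingleton (ZMod (p ^ 0)) := by rw [pow_zero]; infer_instance
    exact repDensity_of_subsingleton _
  · rw [repDensity_of_castHom_ne_zero hF hsing (by rw [residue_base]; exact one_ne_zero),
      residue_base]
  · have repDensity_zero {q : ℕ} (hq : q = p) : repDensity 𝕜 F ((p ^ (2 * (T + 1)) : ℕ) : ZMod q) =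
        repDensity 𝕜 F (0 : ZMod p) := by
      subst hq
      simp
    exact repDensity_zero (pow_one p)
  · rw [mul_add_one, add_comm (2 * T), pow_add p 2]
    refine (repDensity_pow_mul (𝕜 := 𝕜) hF hsing l (p ^ (2 * T))).trans ?_
    ring

end RepDensity

theorem div_add_mul_div_eq_of_sq_eq {K : Type*} [Field K] {a s v x y : K} (hy : y ^ 2 = v)
    (ha : 1 - a ≠ 0) (hay : 1 - a * y ≠ 0) :
    ((1 - x) / (1 - s) + a / (1 - a) * ((1 + y) * (1 - x) / (1 - s))) / (1 - a * v) =
      (1 - x) * (1 - a ^ 2 * v) / ((1 - s) * (1 - a) * (1 - a * v) * (1 - a * y)) := by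
  have combine : 1 + a / (1 - a) * (1 + y) = (1 + a * y) / (1 - a) := by
    field_simp
    ring
  have factor : 1 - a ^ 2 * v = (1 - a * y) * (1 + a * y) := by
    rw [← hy]
    ring
  calc
    _ = (1 - x) * (1 + a / (1 - a) * (1 + y)) / (1 - s) / (1 - a * v) := by ring
    _ = _ := by
      rw [combine, factor]
      field_simp

theorem card_index_quasiSplitForm (k : ℕ) : Fintype.card (Fin 2 ⊕ Fin k × Fin 2) = 2 * k + 2 := by
  simp only [Fintype.card_sum, Fintype.card_prod, Fintype.card_fin]
  ring

section QuasiSplitDensity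

variable {𝕜 : Type*} [RCLike 𝕜] {p : ℕ} [Fact p.Prime] {Δ : ℤ}

theorem repDensity_quasiSplitForm (hp : p ≠ 2) (hΔ : (Δ : ZMod p) ≠ 0) (k : ℕ) (c : ZMod p) :
    repDensity 𝕜 (quasiSplitForm Δ (Fin k)) c = 1 / p +
      quadraticChar (ZMod p) Δ / p ^ (k + 1) * ((if c = 0 then 1 else 0) - 1 / p) := by
  have hp0 : (p : 𝕜) ≠ 0 := mod_cast (Fact.out : p.Prime).ne_zero
  have hK : ringChar (ZMod p) ≠ 2 := by rwa [ZMod.ringChar_zmod_n]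
  have count := congrArg (Int.cast (R := 𝕜)) (numReps_quasiSplitForm Δ (Fin k) hK hΔ c)
  push_cast at count
  rw [repDensity, count, Nat.card_zmod, ZMod.card, card_index_quasiSplitForm, Fintype.card_fin]
  field_simp
  ring

section Factors

variable {k : ℕ} {ε z w : 𝕜}

theorem one_add_repDensity_one_mul_div (hp : p ≠ 2) (hΔ : (Δ : ZMod p) ≠ 0)
    (hε : ε = quadraticChar (ZMod p) Δ) (hw : w = z / p ^ (k + 1)) (hz : 1 - z / p ≠ 0) :
    1 + repDensity 𝕜 (quasiSplitForm Δ (Fin k)) (1 : ZMod p) * z / (1 - z / p) =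
      (1 - ε * w / p) / (1 - z / p) := by
  rw [repDensity_quasiSplitForm hp hΔ, if_neg one_ne_zero, ← hε, hw, eq_div_iff hz, add_mul,
    div_mul_cancel₀ _ hz]
  ring

theorem one_add_repDensity_zero_mul_add_div (hp : p ≠ 2) (hΔ : (Δ : ZMod p) ≠ 0)
    (hε : ε = quadraticChar (ZMod p) Δ) (hw : w = z / p ^ (k + 1)) (hz : 1 - z / p ≠ 0) :
    1 + repDensity 𝕜 (quasiSplitForm Δ (Fin k)) (0 : ZMod p) * z +
        (repDensity 𝕜 (quasiSplitForm Δ (Fin k)) (0 : ZMod p) - 1 / p ^ (2 * k + 2)) / p * z ^ 2 /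
          (1 - z / p) =
      (1 + ε * w) * (1 - ε * w / p) / (1 - z / p) := by
  have hε_sq : ε ^ 2 = 1 := by
    rw [hε]
    exact mod_cast quadraticChar_sq_one hΔ
  have cancel_geometric (α γ : 𝕜) : 1 + α * z + (α - γ) / p * z ^ 2 / (1 - z / p) =
      (1 - z / p + α * z - γ * z ^ 2 / p) / (1 - z / p) := by
    rw [eq_div_iff hz, add_mul, div_mul_cancel₀ _ hz]
    ring
  rw [cancel_geometric, repDensity_quasiSplitForm hp hΔ, if_pos rfl, ← hε, hw]
  congr 1
  linear_combination z ^ 2 / p ^ (2 * k + 3) * hε_sq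

end Factors

theorem hasSum_repDensity_quasiSplitForm (hp : p ≠ 2) (hΔ : (Δ : ZMod p) ≠ 0) (k : ℕ)
    {ε a z w : 𝕜} (hε : ε = quadraticChar (ZMod p) Δ) (ha : ‖a‖ < 1) (hz : ‖z‖ < 1)
    (hw : w = z / p ^ (k + 1)) :
    HasSum
      (fun Tl : ℕ × ℕ => a ^ Tl.1 * z ^ Tl.2 *
        repDensity 𝕜 (quasiSplitForm Δ (Fin k)) ((p ^ (2 * Tl.1) : ℕ) : ZMod (p ^ Tl.2)))
      ((1 - ε * w / p) * (1 - a ^ 2 * w ^ 2) /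
        ((1 - z / p) * (1 - a) * (1 - a * w ^ 2) * (1 - ε * a * w))) := by
  have norm_w_lt_one : ‖w‖ < 1 := by
    rw [hw, ← Nat.cast_pow]
    exact (norm_div_natCast_le _ z).trans_lt hz
  have hε_sq : ε ^ 2 = 1 := by
    rw [hε]
    exact mod_cast quadraticChar_sq_one hΔ
  have εw_sq : (ε * w) ^ 2 = w ^ 2 := by rw [mul_pow, hε_sq, one_mul]
  have norm_εw_lt_one : ‖ε * w‖ < 1 := by
    rwa [← sq_lt_one_iff₀ (norm_nonneg _), ← norm_pow, εw_sq, norm_pow,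
      sq_lt_one_iff₀ (norm_nonneg w)]
  have a_factor := (isUnit_one_sub_of_norm_lt_one ha).ne_zero
  have z_factor :=
    (isUnit_one_sub_of_norm_lt_one ((norm_div_natCast_le p z).trans_lt hz)).ne_zero
  have aεw_factor : 1 - a * (ε * w) ≠ 0 := (isUnit_one_sub_of_norm_lt_one <| by
    rw [norm_mul]
    exact mul_lt_one_of_nonneg_of_lt_one_left (norm_nonneg a) ha norm_εw_lt_one.le).ne_zero
  have z_sq_div : z ^ 2 / (p : 𝕜) ^ (2 * k + 2) = w ^ 2 := by
    rw [hw, div_pow, ← pow_mul]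
    ring
  have series := hasSum_repDensity (isHomogeneous_quasiSplitForm Δ (Fin k))
    (isNonsingularOver_quasiSplitForm Δ (Fin k)
      (Ring.two_ne_zero (by rwa [ZMod.ringChar_zmod_n])) hΔ) ha hz
  rw [card_index_quasiSplitForm, z_sq_div, one_add_repDensity_one_mul_div hp hΔ hε hw z_factor,
    one_add_repDensity_zero_mul_add_div hp hΔ hε hw z_factor] at series
  rwa [div_add_mul_div_eq_of_sq_eq εw_sq a_factor aεw_factor, ← mul_assoc, mul_comm a ε] at series

end QuasiSplitDensity

theorem two_mul_val_add_two_lt {k : ℕ} (i : Fin k) : 2 * (i : ℕ) + 2 < 2 * k + 2 := by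
  have := i.isLt
  omega

theorem two_mul_val_add_three_lt {k : ℕ} (i : Fin k) : 2 * (i : ℕ) + 3 < 2 * k + 2 := by
  have := i.isLt
  omega

theorem card_eq_numReps_quasiSplitForm {R : Type*} [CommRing R] (Δ : ℤ) (k : ℕ) (c : R) :
    Nat.card {v : Fin (2 * k + 2) → R // v 0 ^ 2 - (Δ : R) * v 1 ^ 2 +
        ∑ i : Fin k, v ⟨2 * i + 2, two_mul_val_add_two_lt i⟩ *
          v ⟨2 * i + 3, two_mul_val_add_three_lt i⟩ = c} =
      numReps (quasiSplitForm Δ (Fin k)) c := by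
  let index : Fin 2 ⊕ Fin k × Fin 2 ≃ Fin (2 * k + 2) :=
    ((Equiv.refl _).sumCongr finProdFinEquiv).trans
      (finSumFinEquiv.trans (finCongr (by rw [mul_comm k, add_comm])))
  have index_inl_zero : index (.inl 0) = 0 := rfl
  have index_inl_one : index (.inl 1) = 1 := rfl
  have index_inr_zero (i : Fin k) :
      index (.inr (i, 0)) = ⟨2 * i + 2, two_mul_val_add_two_lt i⟩ :=
    Fin.ext (by simp [index]; omega)
  have index_inr_one (i : Fin k) :
      index (.inr (i, 1)) = ⟨2 * i + 3, two_mul_val_add_three_lt i⟩ :=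
    Fin.ext (by simp [index]; omega)
  refine Nat.card_congr ((index.arrowCongr (Equiv.refl R)).symm.subtypeEquiv fun v => ?_)
  have pull_back (j) : (index.arrowCongr (Equiv.refl R)).symm v j = v (index j) := rfl
  simp only [aeval_quasiSplitForm, pull_back, index_inl_zero, index_inl_one, index_inr_zero,
    index_inr_one]

open Classical in
theorem stmt_17_general {𝕜 : Type*} [RCLike 𝕜] (p : ℕ) (hp : p.Prime) (hp2 : p ≠ 2)
    (Δ : ℤ) (hΔ : ¬ (p : ℤ) ∣ Δ) (ε : 𝕜) (hε : ε = if IsSquare (Δ : ZMod p) then 1 else -1) (k : ℕ)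
    (a z : 𝕜) (ha : ‖a‖ < 1) (hz : ‖z‖ < 1) (w : 𝕜) (hw : w = z / p ^ (k + 1)) :
    HasSum
      (fun Tℓ : ℕ × ℕ => a ^ Tℓ.1 * z ^ Tℓ.2 *
        ((Nat.card {v : Fin (2 * k + 2) → ZMod (p ^ Tℓ.2) //
            v 0 ^ 2 - (Δ : ZMod (p ^ Tℓ.2)) * v 1 ^ 2 +
              ∑ i : Fin k, v ⟨2 * i + 2, two_mul_val_add_two_lt i⟩ *
                v ⟨2 * i + 3, two_mul_val_add_three_lt i⟩
              = ((p ^ (2 * Tℓ.1) : ℕ) : ZMod (p ^ Tℓ.2))} : 𝕜)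
          / p ^ ((2 * k + 2) * Tℓ.2)))
      ((1 - ε * w / p) * (1 - a ^ 2 * w ^ 2)
        / ((1 - z / p) * (1 - a) * (1 - a * w ^ 2) * (1 - ε * a * w))) := by
  have := Fact.mk hp
  have hΔ_ne_zero : (Δ : ZMod p) ≠ 0 := mt (ZMod.intCast_zmod_eq_zero_iff_dvd Δ p).1 hΔ
  have hε_char : ε = quadraticChar (ZMod p) Δ := by
    rw [hε]
    split_ifs with hsq
    · rw [(quadraticChar_one_iff_isSquare hΔ_ne_zero).2 hsq, Int.cast_one]
    · rw [quadraticChar_neg_one_iff_not_isSquare.2 hsq, Int.cast_neg, Int.cast_one]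
  have density_eq (T l : ℕ) : repDensity 𝕜 (quasiSplitForm Δ (Fin k))
      ((p ^ (2 * T) : ℕ) : ZMod (p ^ l)) = numReps (quasiSplitForm Δ (Fin k))
        ((p ^ (2 * T) : ℕ) : ZMod (p ^ l)) / p ^ ((2 * k + 2) * l) := by
    rw [repDensity, Nat.card_zmod, card_index_quasiSplitForm, Nat.cast_pow p l, ← pow_mul,
      mul_comm l]
  simpa only [card_eq_numReps_quasiSplitForm, density_eq] using
    hasSum_repDensity_quasiSplitForm hp2 hΔ_ne_zero k hε_char ha hz hw

open Classical in
theorem stmt_17 (p : ℕ) (hp : p.Prime) (hp2 : p ≠ 2) (Δ : ℤ) (hΔ : ¬ (p : ℤ) ∣ Δ)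
    (ε : ℝ) (hε : ε = if IsSquare (Δ : ZMod p) then 1 else -1) (k : ℕ)
    (a z : ℝ) (ha : |a| < 1) (hz : |z| < 1) (w : ℝ) (hw : w = z / p ^ (k + 1)) :
    HasSum
      (fun Tℓ : ℕ × ℕ => a ^ Tℓ.1 * z ^ Tℓ.2 *
        ((Nat.card {v : Fin (2 * k + 2) → ZMod (p ^ Tℓ.2) //
            v ⟨0, by omega⟩ ^ 2 - (Δ : ZMod (p ^ Tℓ.2)) * v ⟨1, by omega⟩ ^ 2 +
              ∑ i : Fin k, v ⟨2 * i + 2, by have := i.isLt; omega⟩ *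
                v ⟨2 * i + 3, by have := i.isLt; omega⟩
              = ((p ^ (2 * Tℓ.1) : ℕ) : ZMod (p ^ Tℓ.2))} : ℝ)
          / p ^ ((2 * k + 2) * Tℓ.2)))
      ((1 - ε * w / p) * (1 - a ^ 2 * w ^ 2)
        / ((1 - z / p) * (1 - a) * (1 - a * w ^ 2) * (1 - ε * a * w))) :=
  stmt_17_general p hp hp2 Δ hΔ ε hε k a z ha hz w hw
end

section
/- Let p be an odd prime, Δ an integer not divisible by p, and let k be a natural number. Consider the quadratic form in n = 2k+1 variables B(x₀, x₁, …, x_{2k}) = Δ·x₀² + ∑_{i=1}^{k} x_{2i−1}·x_{2i}. For a natural number ℓ let X_ℓ = N_ℓ / p^{nℓ}, where N_ℓ is the number of v ∈ (ℤ/p^ℓℤ)^n with B(v) = 0. Then for every real z with |z| < 1, the series ∑_{ℓ≥0} z^ℓ · (X_ℓ − X_{ℓ+1}) converges with sum (1 − z·p^{−n})(1 − p^{−1}) / ((1 − z/p)(1 − z²·p^{−n})). -/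
/-!
Write `v = (x, a, y)`, so that `B(v) = Δ a² + x ⬝ᵥ y`. For fixed `x` the map `y ↦ x ⬝ᵥ y` is
equidistributed on the ideal generated by the entries of `x`. Over `ℤ/p^ℓℤ` this ideal is generated
by `p^j`, where `j` is the least valuation of an entry, and `p^j` divides `Δ a²` iff `p^⌈j/2⌉`
divides `a`. Summing over `j` gives a closed form for `X_ℓ` in terms of `t = p⁻¹`, and with it
`X_{ℓ+2} = (1 - t^{2k}) t^{ℓ+2} + t^{2k+1} X_ℓ`. Hence the terms `u_ℓ` of the series satisfy
`u_{ℓ+2} = w_ℓ + r u_ℓ` with `w` geometric and `r = z² t^{2k+1}`, which determines their sum.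
-/

open Finset

section Density

variable (K : Type*) [Field K]

/-- The proportion of the elements of `α` that satisfy `P`, as an element of `K`; it is the
normalised solution count `X_ℓ` when `P` is the equation `B(v) = 0` over `ℤ/p^ℓℤ`. -/
noncomputable def density {α : Type*} (P : α → Prop) : K :=
  Nat.card {a // P a} / Nat.card α

variable {K}

theorem density_comp_equiv {α β : Type*} (e : α ≃ β) (P : β → Prop) :
    density K (fun a => P (e a)) = density K P := by
  rw [density, density, Nat.card_congr (e.subtypeEquiv fun _ => Iff.rfl), Nat.card_congr e]

theorem density_prod {α β : Type*} [Fintype α] [Finite β] (P : α × β → Prop) :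
    density K P = (∑ a, density K fun b => P (a, b)) / Nat.card α := by
  have card_eq_sum : Nat.card {w // P w} = ∑ a, Nat.card {b // P (a, b)} := by
    rw [Nat.card_congr (Equiv.subtypeProdEquivSigmaSubtype fun a b => P (a, b)), Nat.card_sigma]
  simp only [density, ← sum_div, card_eq_sum, Nat.card_prod, Nat.cast_mul, Nat.cast_sum]
  rw [div_div, mul_comm]

end Density

section FiniteRing

variable {R ι : Type*} [CommRing R] [Fintype ι]

theorem card_dotProduct_eq_mul_card_span (x : ι → R) {c : R} (hc : c ∈ Ideal.span (Set.range x)) :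
    Nat.card {y : ι → R // x ⬝ᵥ y = c} * Nat.card (Ideal.span (Set.range x)) =
      Nat.card (ι → R) := by
  let f : (ι → R) →ₗ[R] R := dotProductBilin R R x
  have range_f : LinearMap.range f = Ideal.span (Set.range x) := by
    ext b
    simp [f, Ideal.mem_span_range_iff_exists_fun, dotProduct, mul_comm]
  obtain ⟨y₀, rfl⟩ : c ∈ LinearMap.range f := range_f ▸ hc
  have card_fiber : Nat.card {y // x ⬝ᵥ y = f y₀} = Nat.card f.toAddMonoidHom.ker :=
    Nat.card_congr (f.toAddMonoidHom.fiberEquivKer y₀)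
  have card_range : Nat.card (Ideal.span (Set.range x)) = f.toAddMonoidHom.ker.index := by
    rw [AddSubgroup.index_ker, ← range_f]
    rfl
  rw [card_range, card_fiber, AddSubgroup.card_mul_index]

theorem density_add_dotProduct {K A : Type*} [Field K] [CharZero K] [Finite R] [Finite A]
    (f : A → R) (x : ι → R) :
    density K (fun w : A × (ι → R) => f w.1 + x ⬝ᵥ w.2 = 0) =
      density K (fun a => f a ∈ Ideal.span (Set.range x)) /
        Nat.card (Ideal.span (Set.range x)) := by
  classical
  have := Fintype.ofFinite A
  set I := Ideal.span (Set.range x)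
  have card_fiber (a : A) : Nat.card {y : ι → R // f a + x ⬝ᵥ y = 0} * Nat.card I =
      if f a ∈ I then Nat.card (ι → R) else 0 := by
    simp only [add_comm (f a), add_eq_zero_iff_eq_neg]
    split_ifs with ha
    · exact card_dotProduct_eq_mul_card_span x (I.neg_mem ha)
    · have : IsEmpty {y : ι → R // x ⬝ᵥ y = -f a} := ⟨fun y => ha <| I.neg_mem_iff.1 <|
        Ideal.mem_span_range_iff_exists_fun.2 ⟨y, by simp [← y.2, dotProduct, mul_comm]⟩⟩
      simp
  have card_mul : Nat.card {w : A × (ι → R) // f w.1 + x ⬝ᵥ w.2 = 0} * Nat.card I =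
      Nat.card {a // f a ∈ I} * Nat.card (ι → R) := by
    rw [Nat.card_congr (Equiv.subtypeProdEquivSigmaSubtype fun a y => f a + x ⬝ᵥ y = 0),
      Nat.card_sigma, sum_mul, sum_congr rfl fun a _ => card_fiber a, ← sum_filter, sum_const,
      smul_eq_mul, ← Fintype.card_subtype, Nat.card_eq_fintype_card (α := {a // f a ∈ I})]
  have card_I : (Nat.card I : K) ≠ 0 := Nat.cast_ne_zero.2 Nat.card_pos.ne'
  have card_pi : (Nat.card (ι → R) : K) ≠ 0 := Nat.cast_ne_zero.2 Nat.card_pos.ne'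
  rw [density, density, div_div, Nat.card_prod, Nat.cast_mul, ← mul_div_mul_right _ _ card_I,
    ← Nat.cast_mul, card_mul, Nat.cast_mul, mul_right_comm, mul_div_mul_right _ _ card_pi]

end FiniteRing

section Series

/-- The density `X_ℓ` of the zeros of the form with `k` hyperbolic planes over `ℤ/p^ℓℤ`, as a
function of `t = p⁻¹`. The `j`-th summand comes from the `x ∈ (ℤ/p^ℓℤ)^k` divisible by exactly
`p^j`, the last term from `x = 0`. -/
def solutionDensity {K : Type*} [CommRing K] (t : K) (k ℓ : ℕ) : K :=
  ∑ j ∈ range ℓ, (1 - t ^ k) * t ^ (k * j + (ℓ - j)) * t ^ ((j + 1) / 2) +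
    t ^ (k * ℓ) * t ^ ((ℓ + 1) / 2)

theorem solutionDensity_add_two {K : Type*} [CommRing K] (t : K) (k ℓ : ℕ) :
    solutionDensity t k (ℓ + 2) =
      (1 - t ^ (2 * k)) * t ^ (ℓ + 2) + t ^ (2 * k + 1) * solutionDensity t k ℓ := by
  have half_add_two (j : ℕ) : (j + 1 + 1 + 1) / 2 = (j + 1) / 2 + 1 := by omega
  have sub_add_two (j : ℕ) : ℓ + 2 - (j + 1 + 1) = ℓ - j := by omega
  simp only [solutionDensity, sum_range_succ', half_add_two, sub_add_two, mul_add, mul_sum]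
  rw [show ℓ + 2 - (0 + 1) = ℓ + 1 by omega, Nat.sub_zero]
  ring_nf

theorem summable_of_add_eq_add_mul {K : Type*} [NormedRing K] [CompleteSpace K] {u w : ℕ → K}
    {r : K} (d : ℕ) (hr : ‖r‖ < 1) (hw : Summable fun ℓ => ‖w ℓ‖)
    (h : ∀ ℓ, u (ℓ + d) = w ℓ + r * u ℓ) : Summable u := by
  refine Summable.of_norm (summable_of_sum_range_le
    (c := (∑ ℓ ∈ range d, ‖u ℓ‖ + ∑' ℓ, ‖w ℓ‖) / (1 - ‖r‖)) (fun _ => norm_nonneg _) fun N => ?_)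
  have norm_le (ℓ : ℕ) : ‖u (ℓ + d)‖ ≤ ‖w ℓ‖ + ‖r‖ * ‖u ℓ‖ := by
    rw [h]
    exact (norm_add_le _ _).trans (by gcongr; exact norm_mul_le _ _)
  have sum_le := calc
    ∑ ℓ ∈ range N, ‖u ℓ‖ ≤ ∑ ℓ ∈ range (d + N), ‖u ℓ‖ :=
      sum_le_sum_of_subset_of_nonneg (range_mono (Nat.le_add_left N d)) fun _ _ _ => norm_nonneg _
    _ = ∑ ℓ ∈ range d, ‖u ℓ‖ + ∑ ℓ ∈ range N, ‖u (ℓ + d)‖ := by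
      rw [sum_range_add]
      simp only [add_comm d]
    _ ≤ ∑ ℓ ∈ range d, ‖u ℓ‖ + ∑ ℓ ∈ range N, (‖w ℓ‖ + ‖r‖ * ‖u ℓ‖) := by
      gcongr with ℓ
      exact norm_le ℓ
    _ ≤ ∑ ℓ ∈ range d, ‖u ℓ‖ + (∑' ℓ, ‖w ℓ‖ + ‖r‖ * ∑ ℓ ∈ range N, ‖u ℓ‖) := by
      rw [sum_add_distrib, ← mul_sum]
      gcongr
      exact hw.sum_le_tsum _ fun _ _ => norm_nonneg _
  rw [le_div_iff₀ (sub_pos.2 hr)]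
  linarith

variable {K : Type*} [NormedField K] [CompleteSpace K]

theorem hasSum_of_add_eq_add_mul {u w : ℕ → K} {r W : K} (d : ℕ) (hr : ‖r‖ < 1)
    (hw : Summable fun ℓ => ‖w ℓ‖) (hW : HasSum w W) (h : ∀ ℓ, u (ℓ + d) = w ℓ + r * u ℓ) :
    HasSum u ((∑ ℓ ∈ range d, u ℓ + W) / (1 - r)) := by
  obtain ⟨S, hS⟩ := summable_of_add_eq_add_mul d hr hw h
  have one_sub_ne : 1 - r ≠ 0 := sub_ne_zero.2 fun h1 => by simp [← h1] at hr
  have shifted_sum : S - ∑ ℓ ∈ range d, u ℓ = W + r * S :=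
    ((hasSum_nat_add_iff' d).2 hS).unique (by simpa only [h] using hW.add (hS.mul_left r))
  convert hS using 1
  rw [div_eq_iff one_sub_ne]
  linear_combination -shifted_sum

theorem hasSum_solutionDensity {t z : K} (k : ℕ) (hzt : ‖z * t‖ < 1)
    (hr : ‖z ^ 2 * t ^ (2 * k + 1)‖ < 1) :
    HasSum (fun ℓ => z ^ ℓ * (solutionDensity t k ℓ - solutionDensity t k (ℓ + 1)))
      ((1 - z * t ^ (2 * k + 1)) * (1 - t) / ((1 - z * t) * (1 - z ^ 2 * t ^ (2 * k + 1)))) := by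
  have one_sub_ne : 1 - z * t ≠ 0 := sub_ne_zero.2 fun h1 => by simp [← h1] at hzt
  have hgeom := (hasSum_geometric_of_norm_lt_one hzt).mul_left
    ((1 - t ^ (2 * k)) * (1 - t) * (z * t) ^ 2)
  have hnorm : Summable fun ℓ => ‖(1 - t ^ (2 * k)) * (1 - t) * (z * t) ^ 2 * (z * t) ^ ℓ‖ := by
    simp only [norm_mul _ ((z * t) ^ _)]
    exact (summable_norm_geometric_of_norm_lt_one hzt).mul_left _
  convert hasSum_of_add_eq_add_mul 2 hr hnorm hgeom ?_ using 1
  · have density_zero : solutionDensity t k 0 = 1 := by simp [solutionDensity]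
    have density_one : solutionDensity t k 1 = t := by
      simp only [solutionDensity, sum_range_one]
      ring
    have density_two := solutionDensity_add_two t k 0
    simp only [sum_range_succ, range_zero, sum_empty, density_two, density_one, density_zero]
    rw [← div_div]
    congr 1
    rw [div_eq_iff one_sub_ne, add_mul, inv_mul_cancel_right₀ one_sub_ne]
    ring
  · intro ℓ
    rw [show ℓ + 2 + 1 = ℓ + 1 + 2 by ring]
    simp only [solutionDensity_add_two]
    ring

end Series

theorem sum_eq_sum_range_sum_sdiff_add {α M : Type*} [DecidableEq α] [AddCommMonoid M]
    (g : α → M) {S : ℕ → Finset α} (hS : ∀ j, S (j + 1) ⊆ S j) (n : ℕ) :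
    ∑ x ∈ S 0, g x = ∑ j ∈ range n, ∑ x ∈ S j \ S (j + 1), g x + ∑ x ∈ S n, g x := by
  induction n with
  | zero => simp
  | succ n ih => rw [ih, sum_range_succ, add_assoc, sum_sdiff (hS n)]

section ZMod

theorem natCast_dvd_natCast_iff_of_dvd {d q : ℕ} (hd : d ∣ q) {n : ℕ} :
    (d : ZMod q) ∣ (n : ZMod q) ↔ d ∣ n := by
  refine ⟨fun h => ?_, Nat.cast_dvd_cast⟩
  have h := map_dvd (ZMod.castHom hd (ZMod d)) h
  rwa [map_natCast, map_natCast, ZMod.natCast_self, zero_dvd_iff, ZMod.natCast_eq_zero_iff] at h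

theorem card_span_natCast {d q : ℕ} (hq : q ≠ 0) (hd : d ∣ q) :
    Nat.card (Ideal.span {(d : ZMod q)}) = q / d := by
  have mem_iff (a : ZMod q) :
      a ∈ Ideal.span {(d : ZMod q)} ↔ a ∈ AddSubgroup.zmultiples (d : ZMod q) := by
    simp only [Ideal.mem_span_singleton', AddSubgroup.mem_zmultiples_iff, zsmul_eq_mul]
    exact ZMod.intCast_surjective.exists
  rw [Nat.card_congr (Equiv.subtypeEquivRight mem_iff), Nat.card_zmultiples,
    ZMod.addOrderOf_coe _ hq, Nat.gcd_eq_right hd]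

variable {p ℓ j : ℕ} {ι : Type*}

theorem card_span_pow (hp : p.Prime) (hj : j ≤ ℓ) :
    Nat.card (Ideal.span {(p : ZMod (p ^ ℓ)) ^ j}) = p ^ (ℓ - j) := by
  rw [← Nat.cast_pow, card_span_natCast (pow_ne_zero ℓ hp.ne_zero) (pow_dvd_pow p hj),
    Nat.pow_div hj hp.pos]

theorem isUnit_or_natCast_dvd (hp : p.Prime) (a : ZMod (p ^ ℓ)) :
    IsUnit a ∨ (p : ZMod (p ^ ℓ)) ∣ a := by
  have : NeZero (p ^ ℓ) := ⟨pow_ne_zero ℓ hp.ne_zero⟩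
  obtain ⟨n, rfl⟩ := ZMod.natCast_zmod_surjective a
  rw [ZMod.isUnit_iff_coprime]
  exact (Nat.coprime_or_dvd_of_prime hp n).imp (fun h => h.symm.pow_right ℓ) Nat.cast_dvd_cast

theorem span_range_eq_span_pow (hp : p.Prime) {x : ι → ZMod (p ^ ℓ)}
    (hx : ∀ i, (p : ZMod (p ^ ℓ)) ^ j ∣ x i) (hx' : ¬ ∀ i, (p : ZMod (p ^ ℓ)) ^ (j + 1) ∣ x i) :
    Ideal.span (Set.range x) = Ideal.span {(p : ZMod (p ^ ℓ)) ^ j} := by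
  refine le_antisymm ?_ ?_
  · rw [Ideal.span_le]
    rintro _ ⟨i, rfl⟩
    exact Ideal.mem_span_singleton.2 (hx i)
  · obtain ⟨i, hi⟩ := not_forall.1 hx'
    obtain ⟨u, hu⟩ := hx i
    have isUnit_u : IsUnit u := (isUnit_or_natCast_dvd hp u).resolve_right fun hpu =>
      hi (by rw [hu, pow_succ]; exact mul_dvd_mul_left _ hpu)
    have span_eq : Ideal.span {x i} = Ideal.span {(p : ZMod (p ^ ℓ)) ^ j} := by
      rw [hu, Ideal.span_singleton_mul_right_unit isUnit_u]
    rw [← span_eq, Ideal.span_singleton_le_iff_mem]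
    exact Ideal.subset_span ⟨i, rfl⟩

theorem card_forall_pow_dvd [Fintype ι] (hp : p.Prime) (hj : j ≤ ℓ) :
    Nat.card {x : ι → ZMod (p ^ ℓ) // ∀ i, (p : ZMod (p ^ ℓ)) ^ j ∣ x i} =
      (p ^ (ℓ - j)) ^ Fintype.card ι := by
  simp only [← Ideal.mem_span_singleton]
  rw [Nat.card_congr Equiv.subtypePiEquivPi, Nat.card_fun, card_span_pow hp hj,
    Nat.card_eq_fintype_card]

theorem sum_span_range [Fintype ι] [DecidableEq ι] {K : Type*} [CommRing K] [NeZero (p ^ ℓ)]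
    (hp : p.Prime) (g : Ideal (ZMod (p ^ ℓ)) → K) :
    ∑ x : ι → ZMod (p ^ ℓ), g (Ideal.span (Set.range x)) =
      ∑ j ∈ range ℓ, (((p : K) ^ (ℓ - j)) ^ Fintype.card ι - (p ^ (ℓ - (j + 1))) ^ Fintype.card ι) *
        g (Ideal.span {(p : ZMod (p ^ ℓ)) ^ j}) + g (Ideal.span {(p : ZMod (p ^ ℓ)) ^ ℓ}) := by
  let S (j : ℕ) : Finset (ι → ZMod (p ^ ℓ)) := {x | ∀ i, (p : ZMod (p ^ ℓ)) ^ j ∣ x i}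
  let G (x : ι → ZMod (p ^ ℓ)) := g (Ideal.span (Set.range x))
  have S_zero : S 0 = univ := by simp [S]
  have pow_self : (p : ZMod (p ^ ℓ)) ^ ℓ = 0 := by rw [← Nat.cast_pow, ZMod.natCast_self]
  have S_self : S ℓ = {0} := by
    ext x
    simp [S, pow_self, funext_iff]
  have S_succ_subset (j : ℕ) : S (j + 1) ⊆ S j := fun x hx => by
    simp only [S, mem_filter, mem_univ, true_and] at hx ⊢
    exact fun i => (pow_dvd_pow _ j.le_succ).trans (hx i)
  have card_S {j : ℕ} (hj : j ≤ ℓ) : (#(S j) : K) = ((p : K) ^ (ℓ - j)) ^ Fintype.card ι := by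
    rw [← Fintype.card_subtype, ← Nat.card_eq_fintype_card, card_forall_pow_dvd hp hj]
    push_cast
    rfl
  have G_eq {j : ℕ} {x} (hx : x ∈ S j \ S (j + 1)) :
      G x = g (Ideal.span {(p : ZMod (p ^ ℓ)) ^ j}) := by
    simp only [S, mem_sdiff, mem_filter, mem_univ, true_and] at hx
    exact congrArg g (span_range_eq_span_pow hp hx.1 hx.2)
  have G_zero : G 0 = g (Ideal.span {(p : ZMod (p ^ ℓ)) ^ ℓ}) := by
    refine congrArg g ?_
    rw [pow_self, Ideal.span_singleton_zero, Ideal.span_eq_bot]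
    rintro _ ⟨i, rfl⟩
    rfl
  rw [← S_zero, sum_eq_sum_range_sum_sdiff_add G S_succ_subset ℓ, S_self, sum_singleton, G_zero]
  congr 1
  refine sum_congr rfl fun j hj => ?_
  have hjℓ : j + 1 ≤ ℓ := mem_range.1 hj
  rw [sum_congr rfl fun x hx => G_eq hx, sum_const, nsmul_eq_mul,
    cast_card_sdiff (S_succ_subset j), card_S (j.le_succ.trans hjℓ), card_S hjℓ]

theorem pow_dvd_sq_iff (hp : p.Prime) (j n : ℕ) :
    p ^ j ∣ n ^ 2 ↔ p ^ ((j + 1) / 2) ∣ n := by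
  rcases eq_or_ne n 0 with rfl | hn
  · simp
  · rw [hp.pow_dvd_iff_le_factorization (pow_ne_zero 2 hn), hp.pow_dvd_iff_le_factorization hn,
      Nat.factorization_pow, Finsupp.smul_apply, smul_eq_mul]
    omega

theorem mul_sq_mem_span_pow_iff (hp : p.Prime) (hj : j ≤ ℓ) {u : ZMod (p ^ ℓ)} (hu : IsUnit u)
    (a : ZMod (p ^ ℓ)) :
    u * a ^ 2 ∈ Ideal.span {(p : ZMod (p ^ ℓ)) ^ j} ↔
      a ∈ Ideal.span {(p : ZMod (p ^ ℓ)) ^ ((j + 1) / 2)} := by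
  have : NeZero (p ^ ℓ) := ⟨pow_ne_zero ℓ hp.ne_zero⟩
  obtain ⟨n, rfl⟩ := ZMod.natCast_zmod_surjective a
  simp only [Ideal.mem_span_singleton, hu.dvd_mul_left, ← Nat.cast_pow]
  rw [natCast_dvd_natCast_iff_of_dvd (pow_dvd_pow p hj),
    natCast_dvd_natCast_iff_of_dvd (pow_dvd_pow p (by omega)), pow_dvd_sq_iff hp]

variable {K : Type*} [Field K] [CharZero K]

theorem density_mul_sq_mem_span_pow (hp : p.Prime) (hj : j ≤ ℓ) {u : ZMod (p ^ ℓ)}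
    (hu : IsUnit u) :
    density K (fun a => u * a ^ 2 ∈ Ideal.span {(p : ZMod (p ^ ℓ)) ^ j}) =
      (p : K)⁻¹ ^ ((j + 1) / 2) := by
  have hjℓ : (j + 1) / 2 ≤ ℓ := by omega
  have hpK : (p : K) ≠ 0 := Nat.cast_ne_zero.2 hp.ne_zero
  simp only [mul_sq_mem_span_pow_iff hp hj hu]
  calc
    _ = (Nat.card (Ideal.span {(p : ZMod (p ^ ℓ)) ^ ((j + 1) / 2)}) : K) /
        Nat.card (ZMod (p ^ ℓ)) := rfl
    _ = (p : K)⁻¹ ^ ((j + 1) / 2) := by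
      rw [card_span_pow hp hjℓ, Nat.card_zmod, Nat.cast_pow, Nat.cast_pow, pow_sub₀ _ hpK hjℓ,
        inv_pow, mul_div_cancel_left₀ _ (pow_ne_zero ℓ hpK)]

theorem density_add_dotProduct_prod [Fintype ι] {A : Type*} [Finite A] (hp : p.Prime)
    (f : A → ZMod (p ^ ℓ)) :
    density K (fun w : (ι → ZMod (p ^ ℓ)) × A × (ι → ZMod (p ^ ℓ)) => f w.2.1 + w.1 ⬝ᵥ w.2.2 = 0) =
      ∑ j ∈ range ℓ, (1 - (p : K)⁻¹ ^ Fintype.card ι) * (p : K)⁻¹ ^ (Fintype.card ι * j + (ℓ - j)) *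
          density K (fun a => f a ∈ Ideal.span {(p : ZMod (p ^ ℓ)) ^ j}) +
        (p : K)⁻¹ ^ (Fintype.card ι * ℓ) *
          density K (fun a => f a ∈ Ideal.span {(p : ZMod (p ^ ℓ)) ^ ℓ}) := by
  classical
  have : NeZero (p ^ ℓ) := ⟨pow_ne_zero ℓ hp.ne_zero⟩
  have hpK : (p : K) ≠ 0 := Nat.cast_ne_zero.2 hp.ne_zero
  rw [density_prod]
  simp only [density_add_dotProduct]
  rw [sum_span_range hp fun I => density K (fun a => f a ∈ I) / Nat.card I, add_div, sum_div,
    Nat.card_fun, Nat.card_zmod, Nat.card_eq_fintype_card (α := ι), Nat.cast_pow, Nat.cast_pow,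
    card_span_pow hp le_rfl]
  congr 1
  · refine sum_congr rfl fun j hj => ?_
    obtain ⟨m, rfl⟩ := Nat.exists_eq_add_of_lt (mem_range.1 hj)
    rw [card_span_pow hp (by omega), show j + m + 1 - j = m + 1 by omega,
      show j + m + 1 - (j + 1) = m by omega]
    simp only [Nat.cast_pow, inv_pow]
    field_simp
    ring
  · simp only [tsub_self, pow_zero, Nat.cast_one, div_one]
    rw [← pow_mul, mul_comm ℓ, inv_pow, div_eq_inv_mul]

variable {k : ℕ}

theorem odd_index_lt (i : Fin k) : 2 * (i : ℕ) + 1 < 2 * k + 1 := by omega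

theorem even_index_lt (i : Fin k) : 2 * (i : ℕ) + 2 < 2 * k + 1 := by omega

/-- Separates the square variable from the hyperbolic pairs: `v` is sent to the vector of its odd
coordinates, its `0`-th coordinate and the vector of its positive even coordinates. -/
def splitCoordinates {R : Type*} (v : Fin (2 * k + 1) → R) : (Fin k → R) × R × (Fin k → R) :=
  (fun i => v ⟨2 * i + 1, odd_index_lt i⟩, v 0, fun i => v ⟨2 * i + 2, even_index_lt i⟩)

theorem splitCoordinates_bijective {R : Type*} [Finite R] :
    Function.Bijective (splitCoordinates : (Fin (2 * k + 1) → R) → _) := by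
  refine Function.Injective.bijective_of_nat_card_le (fun v w h => funext fun ⟨i, hi⟩ => ?_) ?_
  · simp only [splitCoordinates, Prod.mk.injEq, funext_iff, Fin.forall_iff] at h
    obtain ⟨h_odd, h_zero, h_even⟩ := h
    obtain ⟨m, rfl | rfl | rfl⟩ : ∃ m, i = 0 ∨ i = 2 * m + 1 ∨ i = 2 * m + 2 :=
      ⟨(i - 1) / 2, by omega⟩
    · exact h_zero
    · exact h_odd m (by omega)
    · exact h_even m (by omega)
  · simp only [Nat.card_prod, Nat.card_fun, Nat.card_fin]
    exact le_of_eq (by ring)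

theorem density_mul_sq_add_sum_eq_solutionDensity (hp : p.Prime) {u : ZMod (p ^ ℓ)}
    (hu : IsUnit u) :
    density K (fun v : Fin (2 * k + 1) → ZMod (p ^ ℓ) =>
      u * v 0 ^ 2 +
        ∑ i : Fin k, v ⟨2 * i + 1, odd_index_lt i⟩ * v ⟨2 * i + 2, even_index_lt i⟩ = 0) =
      solutionDensity (p : K)⁻¹ k ℓ := by
  have : NeZero (p ^ ℓ) := ⟨pow_ne_zero ℓ hp.ne_zero⟩
  let e := Equiv.ofBijective _ (splitCoordinates_bijective (R := ZMod (p ^ ℓ)) (k := k))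
  refine (density_comp_equiv e fun w => u * w.2.1 ^ 2 + w.1 ⬝ᵥ w.2.2 = 0).trans ?_
  rw [density_add_dotProduct_prod hp fun a => u * a ^ 2, solutionDensity, Fintype.card_fin,
    density_mul_sq_mem_span_pow hp le_rfl hu]
  congr 1
  refine sum_congr rfl fun j hj => ?_
  rw [density_mul_sq_mem_span_pow hp (mem_range.1 hj).le hu]

end ZMod

theorem stmt_18_general {𝕜 : Type*} [RCLike 𝕜] (p : ℕ) (hp : p.Prime) (Δ : ℤ)
    (hΔ : ¬ (p : ℤ) ∣ Δ) (k : ℕ) (X : ℕ → 𝕜)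
    (hX : ∀ ℓ : ℕ, X ℓ =
      (Nat.card {v : Fin (2 * k + 1) → ZMod (p ^ ℓ) //
          (Δ : ZMod (p ^ ℓ)) * v 0 ^ 2 +
            ∑ i : Fin k, v ⟨2 * i + 1, odd_index_lt i⟩ * v ⟨2 * i + 2, even_index_lt i⟩ = 0} : 𝕜) /
        p ^ ((2 * k + 1) * ℓ))
    (z : 𝕜) (hz : ‖z‖ < p) (hz' : ‖z‖ ^ 2 < p ^ (2 * k + 1)) :
    HasSum (fun ℓ : ℕ => z ^ ℓ * (X ℓ - X (ℓ + 1)))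
      ((1 - z * (p : 𝕜) ^ (-(2 * k + 1 : ℤ))) * (1 - (p : 𝕜)⁻¹)
        / ((1 - z / p) * (1 - z ^ 2 * (p : 𝕜) ^ (-(2 * k + 1 : ℤ))))) := by
  have p_pos : (0 : ℝ) < p := Nat.cast_pos.2 hp.pos
  have isUnit_Δ (ℓ : ℕ) : IsUnit (Δ : ZMod (p ^ ℓ)) := by
    rw [ZMod.coe_int_isUnit_iff_isCoprime, Nat.cast_pow]
    exact ((Nat.prime_iff_prime_int.1 hp).coprime_iff_not_dvd.2 hΔ).pow_left
  have X_eq (ℓ : ℕ) : X ℓ = solutionDensity (p : 𝕜)⁻¹ k ℓ := by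
    rw [hX, ← density_mul_sq_add_sum_eq_solutionDensity hp (isUnit_Δ ℓ), density, Nat.card_fun,
      Nat.card_zmod, Nat.card_fin, ← pow_mul, mul_comm ℓ, Nat.cast_pow]
  have zpow_eq : (p : 𝕜) ^ (-(2 * k + 1 : ℤ)) = (p : 𝕜)⁻¹ ^ (2 * k + 1) := by
    rw [zpow_neg, inv_pow]
    norm_cast
  simp only [X_eq, zpow_eq, div_eq_mul_inv z]
  apply hasSum_solutionDensity
  · rwa [norm_mul, norm_inv, RCLike.norm_natCast, ← div_eq_mul_inv, div_lt_one p_pos]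
  · rwa [norm_mul, norm_pow, norm_pow, norm_inv, RCLike.norm_natCast, inv_pow, ← div_eq_mul_inv,
      div_lt_one (pow_pos p_pos _)]

theorem stmt_18 (p : ℕ) (hp : p.Prime) (hp2 : p ≠ 2) (Δ : ℤ) (hΔ : ¬ (p : ℤ) ∣ Δ)
    (k : ℕ) (X : ℕ → ℝ)
    (hX : ∀ ℓ : ℕ, X ℓ =
      (Nat.card {v : Fin (2 * k + 1) → ZMod (p ^ ℓ) //
          (Δ : ZMod (p ^ ℓ)) * v ⟨0, by omega⟩ ^ 2 +
            ∑ i : Fin k, v ⟨2 * i + 1, by have := i.isLt; omega⟩ *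
              v ⟨2 * i + 2, by have := i.isLt; omega⟩
            = 0} : ℝ) / p ^ ((2 * k + 1) * ℓ))
    (z : ℝ) (hz : |z| < 1) :
    HasSum (fun ℓ : ℕ => z ^ ℓ * (X ℓ - X (ℓ + 1)))
      ((1 - z * (p : ℝ) ^ (-(2 * k + 1 : ℤ))) * (1 - (p : ℝ)⁻¹)
        / ((1 - z / p) * (1 - z ^ 2 * (p : ℝ) ^ (-(2 * k + 1 : ℤ))))) := by
  have one_le_p : (1 : ℝ) ≤ p := Nat.one_le_cast.2 hp.one_le
  exact stmt_18_general p hp Δ hΔ k X hX z (hz.trans_le one_le_p)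
    ((pow_lt_one₀ (abs_nonneg z) hz two_ne_zero).trans_le (one_le_pow₀ one_le_p))
end

section
/- Let p be an odd prime, Δ an integer not divisible by p, set ε = 1 if the image of Δ in ℤ/pℤ is a square and ε = −1 otherwise, and let k be a natural number. Consider the quadratic form in n = 2k+2 variables B(x₀, x₁, …, x_{2k+1}) = x₀² − Δ·x₁² + ∑_{i=1}^{k} x_{2i}·x_{2i+1}. For a natural number ℓ let X_ℓ = N_ℓ / p^{nℓ}, where N_ℓ is the number of v ∈ (ℤ/p^ℓℤ)^n with B(v) = 0. Then for every real z with |z| < 1, the series ∑_{ℓ≥0} z^ℓ · (X_ℓ − X_{ℓ+1}) converges with sum (1 − ε·p^{−(k+1)})(1 − p^{−1}) / ((1 − z/p)(1 − ε·z·p^{−(k+1)})). -/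
/-!
For fixed `x` and `c`, the number of solutions `y` of `x y ≡ c` modulo `p ^ ℓ` depends on `x` only
through `gcd(x, p ^ ℓ)`. Sorting the zeros of `F + x y` by this gcd turns the zero densities `D ℓ`
of `F` modulo `p ^ ℓ` into `p ^ (-ℓ) * (D ℓ + (1 - p⁻¹) * ∑ j < ℓ, D j)`. With `u = p⁻¹`, this
operation maps the exponential smoothing of `s ^ ℓ` with parameter `u` to that of `(u s) ^ ℓ`, so
each hyperbolic plane multiplies `s` by `u` and only the binary form `x² - Δ y²` remains.

If `Δ` is a square modulo `p`, it is one modulo `p ^ ℓ` by Hensel's lemma, and the binary form is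
itself a hyperbolic plane added to the zero form, whose densities have `s = 1`; hence `s = u`. If
not, `p ^ ℓ ∣ x² - Δ y²` only when `p ^ ⌈ℓ / 2⌉` divides `x` and `y`, which is the case `s = -u`.

Consecutive differences of the smoothed sequence are `(1 - s) (1 - u)` times the Cauchy product of
`u ^ i` and `s ^ j`, so the series is a product of two geometric series.
-/

open Finset MvPolynomial

section Reduction

theorem card_subtype_comp_eq_card_ker_mul {G H : Type*} [AddGroup G] [AddGroup H] {f : G →+ H}
    (hf : Function.Surjective f) (P : H → Prop) :
    Nat.card {g // P (f g)} = Nat.card f.ker * Nat.card {h // P h} := by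
  have hinv := Function.surjInv_eq hf
  rw [← Nat.card_prod]
  exact Nat.card_congr
    { toFun g := (⟨g - Function.surjInv hf (f g), by simp [AddMonoidHom.mem_ker, hinv]⟩,
        ⟨f g, g.2⟩)
      invFun x := ⟨x.1 + Function.surjInv hf x.2, by
        simpa [AddMonoidHom.mem_ker.1 x.1.2, hinv] using x.2.2⟩
      left_inv g := by simp
      right_inv x := by
        have hx : f (x.1 + Function.surjInv hf x.2) = x.2 := by
          simp [AddMonoidHom.mem_ker.1 x.1.2, hinv]
        ext <;> simp [hx] }

theorem card_subtype_castHom_comp {σ : Type*} [Fintype σ] {m d : ℕ} (h : d ∣ m)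
    (P : (σ → ZMod d) → Prop) :
    Nat.card {v : σ → ZMod m // P (ZMod.castHom h (ZMod d) ∘ v)} * d ^ Fintype.card σ =
      m ^ Fintype.card σ * Nat.card {w // P w} := by
  let π := (ZMod.castHom h (ZMod d)).toAddMonoidHom.compLeft σ
  have hπ : Function.Surjective π := (ZMod.castHom_surjective h).comp_left
  have hker : Nat.card π.ker * d ^ Fintype.card σ = m ^ Fintype.card σ := by
    have hindex := π.ker.card_mul_index
    rwa [AddSubgroup.index_ker, AddMonoidHom.range_eq_top.2 hπ, AddSubgroup.card_top,
      Nat.card_fun, Nat.card_fun, Nat.card_zmod, Nat.card_zmod,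
      Nat.card_eq_fintype_card (α := σ)] at hindex
  rw [← hker, mul_right_comm, ← card_subtype_comp_eq_card_ker_mul hπ P]
  rfl

theorem natCast_dvd_iff_castHom_eq_zero {m d : ℕ} (h : d ∣ m) (c : ZMod m) :
    (d : ZMod m) ∣ c ↔ ZMod.castHom h (ZMod d) c = 0 := by
  constructor
  · rintro ⟨e, rfl⟩
    rw [map_mul, map_natCast, ZMod.natCast_self, zero_mul]
  · obtain ⟨x, rfl⟩ := ZMod.intCast_surjective c
    rw [map_intCast, ZMod.intCast_zmod_eq_zero_iff_dvd]
    intro hx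
    simpa using map_dvd (Int.castRingHom (ZMod m)) hx

end Reduction

section LinearCongruence

theorem gcd_val_dvd_iff_exists_mul_eq {m : ℕ} [NeZero m] (x c : ZMod m) :
    (m.gcd x.val : ZMod m) ∣ c ↔ ∃ y, x * y = c := by
  constructor
  · rintro ⟨e, rfl⟩
    exact ⟨x⁻¹ * e, by rw [← mul_assoc, ZMod.mul_inv_eq_gcd, Nat.gcd_comm]⟩
  · rintro ⟨y, rfl⟩
    refine Dvd.dvd.mul_right ?_ y
    simpa using Nat.cast_dvd_cast (α := ZMod m) (Nat.gcd_dvd_right m x.val)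

theorem card_zmod_mul_eq {m : ℕ} [NeZero m] (x c : ZMod m)
    [Decidable ((m.gcd x.val : ZMod m) ∣ c)] :
    Nat.card {y // x * y = c} = if (m.gcd x.val : ZMod m) ∣ c then m.gcd x.val else 0 := by
  split_ifs with hc <;> rw [gcd_val_dvd_iff_exists_mul_eq] at hc
  · have hmul : AddMonoidHom.mulLeft x = nsmulAddMonoidHom x.val := by ext y; simp
    calc Nat.card {y // x * y = c}
        = Nat.card {y // x * y = 0} := by
          rw [Nat.card_eq_fintype_card, Nat.card_eq_fintype_card, Fintype.card_subtype,
            Fintype.card_subtype]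
          exact AddMonoidHom.card_fiber_eq_of_mem_range (AddMonoidHom.mulLeft x) hc ⟨0, map_zero _⟩
      _ = Nat.card (AddMonoidHom.mulLeft x).ker := rfl
      _ = m.gcd x.val := by rw [hmul, IsAddCyclic.card_nsmulAddMonoidHom_ker, Nat.card_zmod]
  · have : IsEmpty {y // x * y = c} := ⟨fun y => hc ⟨y, y.2⟩⟩
    exact Nat.card_of_isEmpty

theorem sum_range_comp_gcd {M : Type*} [AddCommMonoid M] {m : ℕ} (hm : m ≠ 0) (f : ℕ → M) :
    ∑ i ∈ range m, f (m.gcd i) = ∑ d ∈ m.divisors, (m / d).totient • f d := by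
  rw [← sum_fiberwise_of_maps_to (t := m.divisors) (g := m.gcd)
    fun i _ => Nat.mem_divisors.2 ⟨Nat.gcd_dvd_left m i, hm⟩]
  refine sum_congr rfl fun d hd => ?_
  rw [Nat.totient_div_of_dvd (Nat.dvd_of_mem_divisors hd), ← sum_const]
  exact sum_congr rfl fun i hi => by rw [(mem_filter.1 hi).2]

theorem sum_zmod_comp_val {M : Type*} [AddCommMonoid M] (m : ℕ) [NeZero m] (f : ℕ → M) :
    ∑ x : ZMod m, f x.val = ∑ i ∈ range m, f i := by
  cases m with
  | zero => exact absurd rfl (NeZero.ne 0)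
  | succ n => exact Fin.sum_univ_eq_sum_range f (n + 1)

theorem card_add_mul_eq_zero {m : ℕ} [NeZero m] {A : Type*} [Finite A] (a : A → ZMod m) :
    Nat.card {w : A × ZMod m × ZMod m // a w.1 + w.2.1 * w.2.2 = 0} =
      ∑ d ∈ m.divisors, (m / d).totient * (d * Nat.card {v // (d : ZMod m) ∣ a v}) := by
  classical
  have := Fintype.ofFinite A
  let e : {w : A × ZMod m × ZMod m // a w.1 + w.2.1 * w.2.2 = 0} ≃
      Σ x : ZMod m, Σ v : A, {y : ZMod m // x * y = -a v} :=
    { toFun w := ⟨w.1.2.1, w.1.1, w.1.2.2, by linear_combination w.2⟩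
      invFun s := ⟨(s.2.1, s.1, s.2.2), by simp [s.2.2.2]⟩ }
  have hfibre (x : ZMod m) : Nat.card (Σ v : A, {y : ZMod m // x * y = -a v}) =
      m.gcd x.val * Nat.card {v // (m.gcd x.val : ZMod m) ∣ a v} := by
    simp only [Nat.card_sigma, card_zmod_mul_eq, dvd_neg]
    rw [← sum_filter, sum_const, smul_eq_mul, mul_comm, Nat.card_eq_fintype_card,
      Fintype.card_subtype]
  simp only [Nat.card_congr e, Nat.card_sigma (α := ZMod m), hfibre]
  rw [sum_zmod_comp_val m fun i => m.gcd i * Nat.card {v // (m.gcd i : ZMod m) ∣ a v},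
    sum_range_comp_gcd (NeZero.ne m) fun d => d * Nat.card {v // (d : ZMod m) ∣ a v}]
  simp only [smul_eq_mul]

end LinearCongruence

section HyperbolicPlane

variable {σ : Type*}

/-- The orthogonal sum of `F` and the hyperbolic plane `x y`, the two new variables being
`Sum.inr 0` and `Sum.inr 1`. -/
noncomputable def addHyperbolicPlane (F : MvPolynomial σ ℤ) : MvPolynomial (σ ⊕ Fin 2) ℤ :=
  rename Sum.inl F + X (Sum.inr 0) * X (Sum.inr 1)

theorem aeval_addHyperbolicPlane {R : Type*} [CommRing R] (F : MvPolynomial σ ℤ)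
    (v : σ ⊕ Fin 2 → R) :
    aeval v (addHyperbolicPlane F) =
      aeval (v ∘ Sum.inl) F + v (Sum.inr 0) * v (Sum.inr 1) := by
  simp [addHyperbolicPlane, aeval_rename]

end HyperbolicPlane

section ZeroDensity

variable (K : Type*) [Field K] {σ τ : Type*} [Fintype σ] [Fintype τ]

/-- The proportion of the vectors modulo `m` at which the integer polynomial `F` vanishes
modulo `m`. -/
noncomputable def zeroDensity (F : MvPolynomial σ ℤ) (m : ℕ) : K :=
  (Nat.card {v : σ → ZMod m // aeval v F = 0} : K) / (m : K) ^ Fintype.card σ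

theorem zeroDensity_rename_equiv (e : σ ≃ τ) (F : MvPolynomial σ ℤ) (m : ℕ) :
    zeroDensity K (rename e F) m = zeroDensity K F m := by
  have h : {v : τ → ZMod m // aeval v (rename e F) = 0} ≃ {v : σ → ZMod m // aeval v F = 0} :=
    (e.symm.arrowCongr (Equiv.refl _)).subtypeEquiv fun v => by
      rw [aeval_rename]; rfl
  rw [zeroDensity, zeroDensity, Nat.card_congr h, Fintype.card_congr e]

variable [CharZero K]

theorem zeroDensity_zero {m : ℕ} (hm : m ≠ 0) : zeroDensity K (0 : MvPolynomial σ ℤ) m = 1 := by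
  have := NeZero.mk hm
  have : (m : K) ≠ 0 := mod_cast hm
  simp [zeroDensity, Nat.card_fun, this]

theorem card_dvd_aeval_eq_mul_zeroDensity (F : MvPolynomial σ ℤ) {m d : ℕ} (hd : d ≠ 0)
    (h : d ∣ m) :
    (Nat.card {v : σ → ZMod m // (d : ZMod m) ∣ aeval v F} : K) =
      (m : K) ^ Fintype.card σ * zeroDensity K F d := by
  have hreduce (v : σ → ZMod m) :
      (d : ZMod m) ∣ aeval v F ↔ aeval (ZMod.castHom h (ZMod d) ∘ v) F = 0 := by
    rw [natCast_dvd_iff_castHom_eq_zero h]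
    exact Eq.congr_left (comp_aeval_apply v (ZMod.castHom h (ZMod d)).toIntAlgHom F)
  have hcount := card_subtype_castHom_comp h fun w : σ → ZMod d => aeval w F = 0
  have hd' : (d : K) ≠ 0 := mod_cast hd
  simp only [hreduce]
  rw [zeroDensity, mul_div_assoc', eq_div_iff (pow_ne_zero _ hd')]
  exact_mod_cast hcount

theorem zeroDensity_addHyperbolicPlane (F : MvPolynomial σ ℤ) {m : ℕ} (hm : m ≠ 0) :
    zeroDensity K (addHyperbolicPlane F) m =
      (∑ d ∈ m.divisors, ((m / d).totient * d : K) * zeroDensity K F d) / (m : K) ^ 2 := by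
  have := NeZero.mk hm
  have : (m : K) ≠ 0 := mod_cast hm
  let e : {v : σ ⊕ Fin 2 → ZMod m // aeval v (addHyperbolicPlane F) = 0} ≃
      {w : (σ → ZMod m) × ZMod m × ZMod m // aeval w.1 F + w.2.1 * w.2.2 = 0} :=
    ((Equiv.sumArrowEquivProdArrow _ _ _).trans
      ((Equiv.refl _).prodCongr (finTwoArrowEquiv _))).subtypeEquiv fun v => by
        rw [aeval_addHyperbolicPlane]; rfl
  rw [zeroDensity, Nat.card_congr e, card_add_mul_eq_zero fun v : σ → ZMod m => aeval v F,
    Fintype.card_sum, Fintype.card_fin, pow_add, div_mul_eq_div_div, Nat.cast_sum, sum_div]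
  congr 1
  refine sum_congr rfl fun d hd => ?_
  rw [Nat.cast_mul, Nat.cast_mul, card_dvd_aeval_eq_mul_zeroDensity K F
    (Nat.pos_of_mem_divisors hd).ne' (Nat.dvd_of_mem_divisors hd)]
  field_simp

theorem zeroDensity_addHyperbolicPlane_prime_pow (F : MvPolynomial σ ℤ) {p : ℕ} (hp : p.Prime)
    (ℓ : ℕ) :
    zeroDensity K (addHyperbolicPlane F) (p ^ ℓ) =
      (p : K)⁻¹ ^ ℓ * (zeroDensity K F (p ^ ℓ) +
        (1 - (p : K)⁻¹) * ∑ j ∈ range ℓ, zeroDensity K F (p ^ j)) := by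
  have hp0 : (p : K) ≠ 0 := mod_cast hp.ne_zero
  have hweight {j : ℕ} (hj : j < ℓ) :
      ((p ^ ℓ / p ^ j).totient * (p ^ j : ℕ) : K) = (p : K) ^ ℓ * (1 - (p : K)⁻¹) := by
    obtain ⟨t, rfl⟩ := Nat.exists_eq_add_of_lt hj
    rw [Nat.pow_div hj.le hp.pos, show j + t + 1 - j = t + 1 by omega,
      Nat.totient_prime_pow_succ hp]
    push_cast [hp.one_le]
    field_simp
    ring
  rw [zeroDensity_addHyperbolicPlane K F (pow_ne_zero ℓ hp.ne_zero),
    Nat.sum_divisors_prime_pow hp, sum_range_succ,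
    sum_congr rfl fun j hj => by rw [hweight (mem_range.1 hj)], ← mul_sum,
    Nat.div_self (pow_pos hp.pos ℓ), Nat.totient_one]
  push_cast
  rw [inv_pow]
  field_simp
  ring

end ZeroDensity

section Smoothing

/-- The exponential smoothing, with parameter `u` and initial value `1`, of the geometric sequence
`s ^ ℓ`. The zero densities modulo `p ^ ℓ` of the forms considered here are of this shape, with
`u = p⁻¹`. -/
def smoothedGeometric {R : Type*} [CommRing R] (u s : R) : ℕ → R
  | 0 => 1
  | ℓ + 1 => u * smoothedGeometric u s ℓ + (1 - u) * s ^ (ℓ + 1)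

variable {R : Type*} [CommRing R] (u s : R)

theorem smoothedGeometric_one (ℓ : ℕ) : smoothedGeometric u 1 ℓ = 1 := by
  induction ℓ with
  | zero => rfl
  | succ ℓ ih => rw [smoothedGeometric, ih]; ring

theorem smoothedGeometric_neg_self (ℓ : ℕ) :
    smoothedGeometric u (-u) ℓ = u ^ (2 * ((ℓ + 1) / 2)) := by
  induction ℓ with
  | zero => simp [smoothedGeometric]
  | succ ℓ ih =>
    rw [smoothedGeometric, ih]
    obtain ⟨t, rfl | rfl⟩ := ℓ.even_or_odd'
    · rw [Odd.neg_pow ⟨t, rfl⟩, show (2 * t + 1 + 1) / 2 = t + 1 by omega,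
        show (2 * t + 1) / 2 = t by omega]
      ring
    · rw [Even.neg_pow ⟨t + 1, by ring⟩, show (2 * t + 1 + 1 + 1) / 2 = t + 1 by omega,
        show (2 * t + 1 + 1) / 2 = t + 1 by omega]
      ring

theorem smoothedGeometric_mul_self (ℓ : ℕ) :
    smoothedGeometric u (u * s) ℓ =
      u ^ ℓ * (smoothedGeometric u s ℓ + (1 - u) * ∑ j ∈ range ℓ, smoothedGeometric u s j) := by
  induction ℓ with
  | zero => simp [smoothedGeometric]
  | succ ℓ ih => rw [smoothedGeometric, ih, sum_range_succ, smoothedGeometric]; ring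

theorem smoothedGeometric_sub_succ (ℓ : ℕ) :
    smoothedGeometric u s ℓ - smoothedGeometric u s (ℓ + 1) =
      (1 - s) * (1 - u) * ∑ i ∈ range (ℓ + 1), u ^ i * s ^ (ℓ - i) := by
  induction ℓ with
  | zero => simp only [smoothedGeometric, zero_add, sum_range_one, Nat.sub_zero]; ring
  | succ ℓ ih =>
    rw [sum_range_succ',
      sum_congr rfl fun i _ => by rw [Nat.add_sub_add_right, pow_succ', mul_assoc],
      ← mul_sum, smoothedGeometric, smoothedGeometric, Nat.sub_zero]
    linear_combination u * ih

theorem hasSum_pow_mul_smoothedGeometric_sub {K : Type*} [NormedField K] [CompleteSpace K]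
    {u s z : K} (hu : ‖z * u‖ < 1) (hs : ‖z * s‖ < 1) :
    HasSum (fun ℓ => z ^ ℓ * (smoothedGeometric u s ℓ - smoothedGeometric u s (ℓ + 1)))
      ((1 - s) * (1 - u) / ((1 - z * u) * (1 - z * s))) := by
  have hprod := hasSum_sum_range_mul_of_summable_norm
    (summable_norm_geometric_of_norm_lt_one hu) (summable_norm_geometric_of_norm_lt_one hs)
  rw [tsum_geometric_of_norm_lt_one hu, tsum_geometric_of_norm_lt_one hs] at hprod
  convert! hprod.mul_left ((1 - s) * (1 - u)) using 1
  · funext ℓ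
    rw [smoothedGeometric_sub_succ, mul_left_comm, mul_sum]
    congr 1
    refine sum_congr rfl fun i hi => ?_
    rw [mul_pow, mul_pow, mul_mul_mul_comm, ← pow_add,
      Nat.add_sub_cancel' (mem_range_succ_iff.1 hi)]
  · rw [div_eq_mul_inv, mul_inv]

end Smoothing

section Nonsquare

theorem prime_dvd_of_dvd_sq_sub_mul_sq {p : ℕ} (hp : p.Prime) {Δ : ℤ}
    (hΔ : ¬IsSquare (Δ : ZMod p)) {x y : ℤ} (h : (p : ℤ) ∣ x ^ 2 - Δ * y ^ 2) :
    (p : ℤ) ∣ x ∧ (p : ℤ) ∣ y := by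
  have := Fact.mk hp
  simp only [← ZMod.intCast_zmod_eq_zero_iff_dvd] at h ⊢
  push_cast at h
  have hy : (y : ZMod p) = 0 := by
    by_contra hy
    refine hΔ ⟨x / y, ?_⟩
    field_simp
    linear_combination -h
  exact ⟨by simpa [hy] using h, hy⟩

theorem pow_dvd_sq_sub_mul_sq_iff {R : Type*} [CommRing R] [IsDomain R] {π Δ : R} (hπ : π ≠ 0)
    (hΔ : ∀ x y, π ∣ x ^ 2 - Δ * y ^ 2 → π ∣ x ∧ π ∣ y) (ℓ : ℕ) (x y : R) :
    π ^ ℓ ∣ x ^ 2 - Δ * y ^ 2 ↔ π ^ ((ℓ + 1) / 2) ∣ x ∧ π ^ ((ℓ + 1) / 2) ∣ y := by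
  induction ℓ using Nat.twoStepInduction generalizing x y with
  | zero => simp
  | one =>
    simp only [pow_one, Nat.reduceAdd, Nat.reduceDiv]
    exact ⟨hΔ x y, fun ⟨hx, hy⟩ =>
      dvd_sub (dvd_pow hx two_ne_zero) ((dvd_pow hy two_ne_zero).mul_left _)⟩
  | more ℓ ih _ =>
    rw [show (ℓ + 2 + 1) / 2 = (ℓ + 1) / 2 + 1 by omega]
    suffices hdiv : π ∣ x → π ∣ y → (π ^ (ℓ + 2) ∣ x ^ 2 - Δ * y ^ 2 ↔
        π ^ ((ℓ + 1) / 2 + 1) ∣ x ∧ π ^ ((ℓ + 1) / 2 + 1) ∣ y) by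
      constructor
      · intro h
        obtain ⟨hx, hy⟩ := hΔ x y ((dvd_pow_self π (by omega)).trans h)
        exact (hdiv hx hy).1 h
      · intro h
        have hπpow : π ∣ π ^ ((ℓ + 1) / 2 + 1) := dvd_pow_self π (Nat.succ_ne_zero _)
        exact (hdiv (hπpow.trans h.1) (hπpow.trans h.2)).2 h
    rintro ⟨a, rfl⟩ ⟨b, rfl⟩
    rw [show (π * a) ^ 2 - Δ * (π * b) ^ 2 = π ^ 2 * (a ^ 2 - Δ * b ^ 2) by ring, add_comm ℓ 2,
      pow_add, mul_dvd_mul_iff_left (pow_ne_zero 2 hπ), ih, pow_succ', mul_dvd_mul_iff_left hπ,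
      mul_dvd_mul_iff_left hπ]

end Nonsquare

section Square

theorem isSquare_of_isSquare_map {R S : Type*} [CommRing R] [CommRing S] {f : R →+* S}
    (hf : Function.Surjective f) (hker : RingHom.ker f ≤ nilradical R) (h2 : IsUnit (2 : R))
    {a : R} (ha : IsUnit a) (hsq : IsSquare (f a)) : IsSquare a := by
  obtain ⟨s, hs⟩ := hsq
  obtain ⟨x, rfl⟩ := hf s
  have hnil : IsNilpotent (x ^ 2 - a) := hker <| by simp [RingHom.mem_ker, hs, sq]
  have hx : IsUnit x := by
    have : IsUnit (x ^ 2) := by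
      simpa using hnil.isUnit_add_left_of_commute ha (Commute.all _ _)
    exact (isUnit_pow_iff two_ne_zero).1 this
  obtain ⟨r, ⟨-, hr⟩, -⟩ := Polynomial.existsUnique_nilpotent_sub_and_aeval_eq_zero
    (P := Polynomial.X ^ 2 - Polynomial.C a) (x := x) (by simpa using hnil)
    (by simpa [one_add_one_eq_two] using h2.mul hx)
  exact ⟨r, by simpa [sub_eq_zero, sq, eq_comm] using hr⟩

theorem isUnit_intCast_zmod_prime_pow {p : ℕ} (hp : p.Prime) {a : ℤ} (ha : ¬(p : ℤ) ∣ a)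
    (ℓ : ℕ) : IsUnit (a : ZMod (p ^ ℓ)) := by
  rw [ZMod.coe_int_isUnit_iff_isCoprime, Nat.cast_pow]
  exact ((Nat.prime_iff_prime_int.1 hp).coprime_iff_not_dvd.2 ha).pow_left

theorem isUnit_two_zmod_prime_pow {p : ℕ} (hp : p.Prime) (hp2 : p ≠ 2) (ℓ : ℕ) :
    IsUnit (2 : ZMod (p ^ ℓ)) := by
  have hdvd : ¬(p : ℤ) ∣ 2 := by
    exact_mod_cast fun h => hp2 ((Nat.prime_dvd_prime_iff_eq hp Nat.prime_two).1 h)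
  exact_mod_cast isUnit_intCast_zmod_prime_pow hp hdvd ℓ

theorem isSquare_intCast_zmod_prime_pow {p : ℕ} (hp : p.Prime) (hp2 : p ≠ 2) {a : ℤ}
    (ha : ¬(p : ℤ) ∣ a) (hsq : IsSquare (a : ZMod p)) (ℓ : ℕ) :
    IsSquare (a : ZMod (p ^ ℓ)) := by
  rcases eq_or_ne ℓ 0 with rfl | hℓ
  · exact ⟨0, Subsingleton.elim (α := ZMod 1) _ _⟩
  have hdvd : p ∣ p ^ ℓ := dvd_pow_self p hℓ
  have hker : RingHom.ker (ZMod.castHom hdvd (ZMod p)) ≤ nilradical (ZMod (p ^ ℓ)) := by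
    intro c hc
    obtain ⟨e, rfl⟩ := (natCast_dvd_iff_castHom_eq_zero hdvd c).2 hc
    exact mem_nilradical.2 ⟨ℓ, by rw [mul_pow, ← Nat.cast_pow, ZMod.natCast_self, zero_mul]⟩
  exact isSquare_of_isSquare_map (ZMod.castHom_surjective hdvd) hker
    (isUnit_two_zmod_prime_pow hp hp2 ℓ) (isUnit_intCast_zmod_prime_pow hp ha ℓ)
    (by rwa [map_intCast])

end Square

section NormForm

/-- The binary form `x₀² - Δ x₁²`, the norm form of `ℤ[√Δ]`. -/
noncomputable def normForm (Δ : ℤ) : MvPolynomial (Fin 2) ℤ :=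
  X 0 ^ 2 - C Δ * X 1 ^ 2

theorem aeval_normForm {R : Type*} [CommRing R] (Δ : ℤ) (v : Fin 2 → R) :
    aeval v (normForm Δ) = v 0 ^ 2 - Δ * v 1 ^ 2 := by
  simp [normForm]

variable (K : Type*) [Field K] {Δ : ℤ}

theorem zeroDensity_X_mul_X (m : ℕ) :
    zeroDensity K (X 0 * X 1 : MvPolynomial (Fin 2) ℤ) m =
      zeroDensity K (addHyperbolicPlane (0 : MvPolynomial (Fin 0) ℤ)) m := by
  rw [← zeroDensity_rename_equiv K (Equiv.emptySum (Fin 0) (Fin 2))]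
  simp [addHyperbolicPlane]

theorem zeroDensity_normForm_eq_X_mul_X {m : ℕ} (h2 : IsUnit (2 : ZMod m))
    (hΔ : IsUnit (Δ : ZMod m)) (hsq : IsSquare (Δ : ZMod m)) :
    zeroDensity K (normForm Δ) m = zeroDensity K (X 0 * X 1 : MvPolynomial (Fin 2) ℤ) m := by
  obtain ⟨δ, hδ⟩ := hsq
  have hδunit : IsUnit δ := isUnit_of_mul_isUnit_left (hδ ▸ hΔ)
  obtain ⟨b, hb⟩ := (h2.mul hδunit).exists_left_inv
  let e : (Fin 2 → ZMod m) ≃ (Fin 2 → ZMod m) :=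
    { toFun v := ![v 0 - δ * v 1, v 0 + δ * v 1]
      invFun w := ![b * δ * (w 0 + w 1), b * (w 1 - w 0)]
      left_inv v := by
        simp only [funext_iff, Fin.forall_fin_two, Matrix.cons_val_zero, Matrix.cons_val_one]
        exact ⟨by linear_combination v 0 * hb, by linear_combination v 1 * hb⟩
      right_inv w := by
        simp only [funext_iff, Fin.forall_fin_two, Matrix.cons_val_zero, Matrix.cons_val_one]
        exact ⟨by linear_combination w 0 * hb, by linear_combination w 1 * hb⟩ }
  have hfactor (v : Fin 2 → ZMod m) :
      aeval v (normForm Δ) = aeval (e v) (X 0 * X 1 : MvPolynomial (Fin 2) ℤ) := by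
    rw [aeval_normForm, map_mul, aeval_X, aeval_X, hδ]
    exact show _ = (v 0 - δ * v 1) * (v 0 + δ * v 1) by ring
  have hcard : Nat.card {v : Fin 2 → ZMod m // aeval v (normForm Δ) = 0} =
      Nat.card {w : Fin 2 → ZMod m // aeval w (X 0 * X 1 : MvPolynomial (Fin 2) ℤ) = 0} :=
    Nat.card_congr (e.subtypeEquiv fun v => (hfactor v).congr_left)
  rw [zeroDensity, zeroDensity, hcard]

variable [CharZero K]

theorem zeroDensity_normForm_of_isSquare {p : ℕ} (hp : p.Prime) (hp2 : p ≠ 2)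
    (hΔ : ¬(p : ℤ) ∣ Δ) (hsq : IsSquare (Δ : ZMod p)) (ℓ : ℕ) :
    zeroDensity K (normForm Δ) (p ^ ℓ) = smoothedGeometric (p : K)⁻¹ (p : K)⁻¹ ℓ := by
  have hone (j : ℕ) : zeroDensity K (0 : MvPolynomial (Fin 0) ℤ) (p ^ j) =
      smoothedGeometric (p : K)⁻¹ 1 j := by
    rw [smoothedGeometric_one, zeroDensity_zero K (pow_ne_zero j hp.ne_zero)]
  rw [zeroDensity_normForm_eq_X_mul_X K (isUnit_two_zmod_prime_pow hp hp2 ℓ)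
      (isUnit_intCast_zmod_prime_pow hp hΔ ℓ) (isSquare_intCast_zmod_prime_pow hp hp2 hΔ hsq ℓ),
    zeroDensity_X_mul_X, zeroDensity_addHyperbolicPlane_prime_pow K 0 hp]
  simp only [hone]
  rw [← smoothedGeometric_mul_self, mul_one]

theorem zeroDensity_normForm_of_not_isSquare {p : ℕ} (hp : p.Prime)
    (hΔ : ¬IsSquare (Δ : ZMod p)) (ℓ : ℕ) :
    zeroDensity K (normForm Δ) (p ^ ℓ) = smoothedGeometric (p : K)⁻¹ (-(p : K)⁻¹) ℓ := by
  have hp0 : (p : K) ≠ 0 := mod_cast hp.ne_zero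
  set c := (ℓ + 1) / 2 with hc
  have hdvd : p ^ c ∣ p ^ ℓ := pow_dvd_pow p (by omega)
  have hzero (v : Fin 2 → ZMod (p ^ ℓ)) :
      aeval v (normForm Δ) = 0 ↔ ZMod.castHom hdvd (ZMod (p ^ c)) ∘ v = 0 := by
    obtain ⟨w, rfl⟩ := ZMod.intCast_surjective.comp_left v
    have hpow := pow_dvd_sq_sub_mul_sq_iff (mod_cast hp.ne_zero)
      (fun _ _ => prime_dvd_of_dvd_sq_sub_mul_sq hp hΔ) ℓ (w 0) (w 1)
    rw [← hc, ← Nat.cast_pow, ← Nat.cast_pow] at hpow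
    simp only [← ZMod.intCast_zmod_eq_zero_iff_dvd] at hpow
    simpa [aeval_normForm, funext_iff, Fin.forall_fin_two] using hpow
  have hcount := card_subtype_castHom_comp hdvd fun w : Fin 2 → ZMod (p ^ c) => w = 0
  simp only [← hzero, Nat.card_unique, mul_one, Fintype.card_fin] at hcount
  rw [smoothedGeometric_neg_self, ← hc, zeroDensity, inv_pow,
    div_eq_iff (pow_ne_zero _ (mod_cast pow_ne_zero ℓ hp.ne_zero)), Fintype.card_fin,
    eq_inv_mul_iff_mul_eq₀ (pow_ne_zero _ hp0), mul_comm, mul_comm 2 c, pow_mul]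
  exact_mod_cast hcount

end NormForm

section NormFormAddPlanes

/-- The quadratic form `x₀² - Δ x₁² + x₂ x₃ + ⋯ + x₂ₖ x₂ₖ₊₁`. -/
noncomputable def normFormAddPlanes (Δ : ℤ) (k : ℕ) : MvPolynomial (Fin (2 * k + 2)) ℤ :=
  X 0 ^ 2 - C Δ * X 1 ^ 2 +
    ∑ i : Fin k, X ⟨2 * (i + 1), by omega⟩ * X ⟨2 * (i + 1) + 1, by omega⟩

theorem aeval_normFormAddPlanes {R : Type*} [CommRing R] (Δ : ℤ) (k : ℕ)
    (v : Fin (2 * k + 2) → R) :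
    aeval v (normFormAddPlanes Δ k) =
      v 0 ^ 2 - Δ * v 1 ^ 2 +
        ∑ i : Fin k, v ⟨2 * (i + 1), by omega⟩ * v ⟨2 * (i + 1) + 1, by omega⟩ := by
  simp [normFormAddPlanes]

theorem normFormAddPlanes_zero (Δ : ℤ) : normFormAddPlanes Δ 0 = normForm Δ := by
  simp [normFormAddPlanes, normForm]

theorem normFormAddPlanes_succ (Δ : ℤ) (k : ℕ) :
    normFormAddPlanes Δ (k + 1) =
      rename finSumFinEquiv (addHyperbolicPlane (normFormAddPlanes Δ k)) := by
  simp only [normFormAddPlanes, addHyperbolicPlane, Fin.sum_univ_castSucc, map_add, map_sub,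
    map_pow, map_mul, map_sum, rename_X, rename_C, add_assoc]
  rfl

open Classical in
theorem zeroDensity_normFormAddPlanes (K : Type*) [Field K] [CharZero K] {p : ℕ} (hp : p.Prime)
    (hp2 : p ≠ 2) {Δ : ℤ} (hΔ : ¬(p : ℤ) ∣ Δ) {ε : K}
    (hε : ε = if IsSquare (Δ : ZMod p) then 1 else -1) (k ℓ : ℕ) :
    zeroDensity K (normFormAddPlanes Δ k) (p ^ ℓ) =
      smoothedGeometric (p : K)⁻¹ ((p : K)⁻¹ ^ (k + 1) * ε) ℓ := by
  induction k generalizing ℓ with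
  | zero =>
    rw [normFormAddPlanes_zero, zero_add, pow_one, hε]
    split_ifs with hsq
    · rw [mul_one, zeroDensity_normForm_of_isSquare K hp hp2 hΔ hsq]
    · rw [mul_neg_one, zeroDensity_normForm_of_not_isSquare K hp hsq]
  | succ k ih =>
    rw [normFormAddPlanes_succ, zeroDensity_rename_equiv,
      zeroDensity_addHyperbolicPlane_prime_pow K _ hp, pow_succ' _ (k + 1), mul_assoc,
      smoothedGeometric_mul_self]
    simp only [ih]

end NormFormAddPlanes

open Classical in
theorem stmt_19_general {𝕜 : Type*} [RCLike 𝕜] {p : ℕ} (hp : p.Prime) (hp2 : p ≠ 2) {Δ : ℤ}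
    (hΔ : ¬(p : ℤ) ∣ Δ) {ε : 𝕜} (hε : ε = if IsSquare (Δ : ZMod p) then 1 else -1) (k : ℕ)
    {z : 𝕜} (hz : ‖z‖ < p) :
    HasSum (fun ℓ : ℕ => z ^ ℓ * (zeroDensity 𝕜 (normFormAddPlanes Δ k) (p ^ ℓ) -
        zeroDensity 𝕜 (normFormAddPlanes Δ k) (p ^ (ℓ + 1))))
      ((1 - ε * (p : 𝕜) ^ (-(k + 1 : ℤ))) * (1 - (p : 𝕜)⁻¹)
        / ((1 - z / p) * (1 - ε * z * (p : 𝕜) ^ (-(k + 1 : ℤ))))) := by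
  have hεnorm : ‖ε‖ = 1 := by rw [hε]; split_ifs <;> simp
  have hinv : ‖(p : 𝕜)⁻¹‖ ≤ 1 := by
    simpa using inv_le_one_of_one_le₀ (Nat.one_le_cast.2 hp.one_le : (1 : ℝ) ≤ p)
  have hu : ‖z * (p : 𝕜)⁻¹‖ < 1 := by
    rw [norm_mul, norm_inv, RCLike.norm_natCast, ← div_eq_mul_inv]
    exact (div_lt_one (Nat.cast_pos.2 hp.pos)).2 hz
  have hs : ‖z * ((p : 𝕜)⁻¹ ^ (k + 1) * ε)‖ < 1 := calc
    ‖z * ((p : 𝕜)⁻¹ ^ (k + 1) * ε)‖ = ‖z * (p : 𝕜)⁻¹‖ * ‖(p : 𝕜)⁻¹‖ ^ k := by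
      simp only [norm_mul, norm_pow, hεnorm]; ring
    _ ≤ ‖z * (p : 𝕜)⁻¹‖ :=
      mul_le_of_le_one_right (norm_nonneg _) (pow_le_one₀ (norm_nonneg _) hinv)
    _ < 1 := hu
  have hpow : (p : 𝕜) ^ (-(k + 1 : ℤ)) = (p : 𝕜)⁻¹ ^ (k + 1) := by
    rw [zpow_neg, inv_pow]; norm_cast
  have hsum := hasSum_pow_mul_smoothedGeometric_sub hu hs
  simp only [zeroDensity_normFormAddPlanes 𝕜 hp hp2 hΔ hε, hpow]
  convert! hsum using 2 <;> ring

open Classical in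
theorem stmt_19 (p : ℕ) (hp : p.Prime) (hp2 : p ≠ 2) (Δ : ℤ) (hΔ : ¬ (p : ℤ) ∣ Δ)
    (ε : ℝ) (hε : ε = if IsSquare (Δ : ZMod p) then 1 else -1) (k : ℕ)
    (X : ℕ → ℝ)
    (hX : ∀ ℓ : ℕ, X ℓ =
      (Nat.card {v : Fin (2 * k + 2) → ZMod (p ^ ℓ) //
          v ⟨0, by omega⟩ ^ 2 - (Δ : ZMod (p ^ ℓ)) * v ⟨1, by omega⟩ ^ 2 +
            ∑ i : Fin k, v ⟨2 * i + 2, by have := i.isLt; omega⟩ *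
              v ⟨2 * i + 3, by have := i.isLt; omega⟩
            = 0} : ℝ) / p ^ ((2 * k + 2) * ℓ))
    (z : ℝ) (hz : |z| < 1) :
    HasSum (fun ℓ : ℕ => z ^ ℓ * (X ℓ - X (ℓ + 1)))
      ((1 - ε * (p : ℝ) ^ (-(k + 1 : ℤ))) * (1 - (p : ℝ)⁻¹)
        / ((1 - z / p) * (1 - ε * z * (p : ℝ) ^ (-(k + 1 : ℤ))))) := by
  have hdensity ℓ : X ℓ = zeroDensity ℝ (normFormAddPlanes Δ k) (p ^ ℓ) := by
    simp [hX, zeroDensity, aeval_normFormAddPlanes, pow_mul', mul_add]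
  simpa only [hdensity] using
    stmt_19_general hp hp2 hΔ hε k (hz.trans (Nat.one_lt_cast.2 hp.one_lt))
end
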